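/- For every prime power q with q ≡ 1 (mod 4), |σ(q) − 953·2⁻¹⁵·q²| < 2518·q^{3/2} + 2623·q. -/

import Mathlib

open scoped Classical

noncomputable section

/-- The operation of the quasigroup `Q_{a,b}`:
`u*v = u + a(v-u)` if `v-u` is a square, `u*v = u + b(v-u)` otherwise. -/
def qop {F : Type*} [Field F] (a b u v : F) : F :=
  if IsSquare (v - u) then u + a * (v - u) else u + b * (v - u)

/-- The set `Σ(F)` of pairs `(a,b)` with `a ≠ b`, `a,b ∉ {0,1}`, and
`ab` and `(1-a)(1-b)` both squares. -/
def SigSet (F : Type*) [Field F] : Set (F × F) :=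
  {p | p.1 ≠ p.2 ∧ p.1 ≠ 0 ∧ p.1 ≠ 1 ∧ p.2 ≠ 0 ∧ p.2 ≠ 1 ∧
    IsSquare (p.1 * p.2) ∧ IsSquare ((1 - p.1) * (1 - p.2))}

/-- `Q_{a,b}` is maximally nonassociative. -/
def MaxNA {F : Type*} [Field F] (a b : F) : Prop :=
  ∀ u v w : F, qop a b (qop a b u v) w = qop a b u (qop a b v w) → u = v ∧ v = w

/-- `σ(q)`: the number of pairs `(a,b) ∈ Σ` for which `Q_{a,b}` is
maximally nonassociative. -/
def sigmaCount (F : Type*) [Field F] : ℕ :=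
  Set.ncard {p : F × F | p ∈ SigSet F ∧ MaxNA p.1 p.2}

namespace Stepanov
open Polynomial

variable {F : Type*} [Field F]

lemma natDegree_lt_of_deg {p : F[X]} {n : ℕ} (hn : 0 < n) (h : p.degree < n) : p.natDegree < n := by
  by_cases hp : p = 0
  · simpa [hp] using hn
  · exact (natDegree_lt_iff_degree_lt hp).2 h

lemma pow_dvd_hasseDeriv (f : F[X]) (e : ℕ) : ∀ (k : ℕ) (g : F[X]),
    f ^ (e - k) ∣ hasseDeriv k (f ^ e * g) := by
  induction e with
  | zero => intro k g; simp
  | succ e ih =>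
    intro k g
    have : f ^ (e + 1) * g = f * (f ^ e * g) := by ring
    rw [this, hasseDeriv_mul]
    apply Finset.dvd_sum
    rintro ⟨i, j⟩ hij
    rw [Finset.HasAntidiagonal.mem_antidiagonal] at hij
    simp only at hij ⊢
    rcases Nat.eq_zero_or_pos i with rfl | hi
    · obtain rfl : j = k := by omega
      rw [hasseDeriv_zero']
      refine (pow_dvd_pow f (show e + 1 - j ≤ (e - j) + 1 by omega)).trans ?_
      rw [pow_succ']
      exact mul_dvd_mul_left f (ih j g)
    · refine (pow_dvd_pow f (show e + 1 - k ≤ e - j by omega)).trans ?_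
      exact (ih j g).mul_left _

lemma hasseDeriv_factor (f : F[X]) (hf : f ≠ 0) (e k : ℕ) (hk : k ≤ e) (g : F[X]) :
    ∃ h : F[X], hasseDeriv k (f ^ e * g) = f ^ (e - k) * h ∧
      h.natDegree ≤ g.natDegree + k * f.natDegree := by
  obtain ⟨h, hh⟩ := pow_dvd_hasseDeriv f e k g
  refine ⟨h, hh, ?_⟩
  by_cases h0 : h = 0
  · simp [h0]
  have h1 : (f ^ (e - k) * h).natDegree = (e - k) * f.natDegree + h.natDegree := by
    rw [natDegree_mul (pow_ne_zero _ hf) h0, natDegree_pow]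
  have h2 : (hasseDeriv k (f ^ e * g)).natDegree ≤ e * f.natDegree + g.natDegree := by
    refine (natDegree_hasseDeriv_le _ _).trans ((Nat.sub_le _ _).trans ?_)
    refine natDegree_mul_le.trans ?_
    rw [natDegree_pow]
  rw [hh, h1] at h2
  obtain ⟨c, rfl⟩ := Nat.exists_eq_add_of_le hk
  simp only [Nat.add_sub_cancel_left] at h2
  nlinarith

variable [Fintype F]

lemma X_sub_C_pow_card (t : F) : (X - C t : F[X]) ^ (Fintype.card F) = X ^ (Fintype.card F) - C t := by
  obtain ⟨p, hp⟩ := CharP.exists F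
  obtain ⟨n, hpp, hn⟩ := FiniteField.card F p
  have := Fact.mk hpp
  have h := sub_pow_char_pow (R := F[X]) (p := p) (n := (n : ℕ)) X (C t)
  rw [← hn] at h
  rw [h, ← C_pow, FiniteField.pow_card]

lemma pow_card_sub (f : F[X]) (v : F) :
    f ^ (Fintype.card F) - C v = (f - C v) ^ (Fintype.card F) := by
  obtain ⟨p, hp⟩ := CharP.exists F
  obtain ⟨n, hpp, hn⟩ := FiniteField.card F p
  have := Fact.mk hpp
  have h := sub_pow_char_pow (R := F[X]) (p := p) (n := (n : ℕ)) f (C v)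
  rw [← hn] at h
  rw [h, ← C_pow, FiniteField.pow_card]

lemma hasseDeriv_Y (t : F) (k : ℕ) (h0 : 0 < k) (hk : k < Fintype.card F) :
    hasseDeriv k ((X - C t : F[X]) ^ (Fintype.card F)) = 0 := by
  rw [X_sub_C_pow_card, map_sub, hasseDeriv_C _ _ h0, sub_zero, ← monomial_one_right_eq_X_pow,
    hasseDeriv_monomial]
  obtain ⟨p, hp⟩ := CharP.exists F
  obtain ⟨n, hpp, hn⟩ := FiniteField.card F p
  have : p ∣ (Fintype.card F).choose k := by
    rw [hn] at hk ⊢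
    exact hpp.dvd_choose_pow h0.ne' hk.ne
  rw [(CharP.cast_eq_zero_iff F p _).2 this]
  simp

lemma hasseDeriv_mul_Y (t : F) (k : ℕ) (hk : k < Fintype.card F) (g : F[X]) :
    hasseDeriv k (g * (X - C t : F[X]) ^ (Fintype.card F)) =
      hasseDeriv k g * (X - C t : F[X]) ^ (Fintype.card F) := by
  rw [hasseDeriv_mul, Finset.sum_eq_single (k, 0)]
  · simp
  · rintro ⟨i, j⟩ hij hne
    rw [Finset.HasAntidiagonal.mem_antidiagonal] at hij
    simp only at hij ⊢
    rw [hasseDeriv_Y, mul_zero]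
    · rcases Nat.eq_zero_or_pos j with rfl | h
      · exfalso; apply hne; simp at hij; simp [hij]
      · exact h
    · omega
  · intro h; simp at h

lemma hasseDeriv_mul_Y_pow (t : F) (k : ℕ) (hk : k < Fintype.card F) (g : F[X]) (j : ℕ) :
    hasseDeriv k (g * ((X - C t : F[X]) ^ (Fintype.card F)) ^ j) =
      hasseDeriv k g * ((X - C t : F[X]) ^ (Fintype.card F)) ^ j := by
  induction j with
  | zero => simp
  | succ j ih => rw [pow_succ, ← mul_assoc, hasseDeriv_mul_Y _ _ hk, ih, mul_assoc]

lemma finrank_degreeLT (K : Type*) [Field K] (n : ℕ) : Module.finrank K (degreeLT K n) = n := by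
  rw [(degreeLTEquiv K n).finrank_eq]; simp

instance (K : Type*) [Field K] (n : ℕ) : FiniteDimensional K (degreeLT K n) :=
  (degreeLTEquiv K n).symm.finiteDimensional

/-- existence of the auxiliary coefficients -/
lemma exists_aux (f : F[X]) (hf : f ≠ 0) (t c : F) (L M n J N : ℕ)
    (hN : n + L * f.natDegree + J ≤ N) (hdim : L * N < 2 * J * n) :
    ∃ r s : Fin J → F[X], (∀ j, (r j).degree < n) ∧ (∀ j, (s j).degree < n) ∧
      (∃ j, r j ≠ 0 ∨ s j ≠ 0) ∧
      ∀ k < L, ∑ j : Fin J, (hasseDeriv k (f ^ L * r j) * f ^ M +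
        C c * hasseDeriv k (f ^ (L + M) * s j)) * (X - C t) ^ (j : ℕ) = 0 := by
  let T : ℕ → ((Fin J → degreeLT F n) × (Fin J → degreeLT F n)) →ₗ[F] F[X] := fun k =>
    { toFun := fun v => ∑ j : Fin J, (hasseDeriv k (f ^ L * (v.1 j : F[X])) * f ^ M +
        C c * hasseDeriv k (f ^ (L + M) * (v.2 j : F[X]))) * (X - C t) ^ (j : ℕ) * f ^ k
      map_add' := by
        intro v w
        rw [← Finset.sum_add_distrib]
        refine Finset.sum_congr rfl fun j _ => ?_
        simp only [Prod.fst_add, Prod.snd_add, Pi.add_apply, Submodule.coe_add, mul_add, map_add]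
        ring
      map_smul' := by
        intro a v
        rw [RingHom.id_apply, Finset.smul_sum]
        refine Finset.sum_congr rfl fun j _ => ?_
        simp only [Prod.smul_fst, Prod.smul_snd, Pi.smul_apply, Submodule.coe_smul, mul_smul_comm,
          map_smul, smul_mul_assoc]
        rw [← smul_add]
        simp only [smul_mul_assoc] }
  let W : Submodule F F[X] := (degreeLT F N).map (LinearMap.mulLeft F (f ^ (L + M)))
  have hT : ∀ k : Fin L, ∀ v, T k v ∈ W := by
    intro k v
    simp only [T, LinearMap.coe_mk, AddHom.coe_mk]
    apply Submodule.sum_mem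
    intro j _
    obtain ⟨h1, e1, d1⟩ := hasseDeriv_factor f hf L k k.2.le (v.1 j : F[X])
    obtain ⟨h2, e2, d2⟩ := hasseDeriv_factor f hf (L + M) k (by omega) (v.2 j : F[X])
    refine ⟨(h1 + C c * h2) * (X - C t) ^ (j : ℕ), ?_, ?_⟩
    · have hn : 0 < n := by
        rcases Nat.eq_zero_or_pos n with rfl | h
        · simp at hdim
        · exact h
      have b1 : (v.1 j : F[X]).natDegree ≤ n - 1 := by
        have := mem_degreeLT.1 (v.1 j).2
        exact Nat.le_sub_one_of_lt (natDegree_lt_of_deg hn this)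
      have b2 : (v.2 j : F[X]).natDegree ≤ n - 1 := by
        have := mem_degreeLT.1 (v.2 j).2
        exact Nat.le_sub_one_of_lt (natDegree_lt_of_deg hn this)
      have hkL : (k : ℕ) * f.natDegree ≤ L * f.natDegree := Nat.mul_le_mul_right _ k.2.le
      have b3 : ((h1 + C c * h2) * (X - C t) ^ (j : ℕ)).natDegree ≤
          n - 1 + L * f.natDegree + j := by
        refine natDegree_mul_le.trans (add_le_add ?_ ?_)
        · refine (natDegree_add_le _ _).trans (max_le (by omega) ?_)
          refine (natDegree_C_mul_le _ _).trans (by omega)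
        · rw [natDegree_pow, natDegree_X_sub_C, mul_one]
      refine mem_degreeLT.2 (lt_of_le_of_lt degree_le_natDegree ?_)
      have := j.2
      exact_mod_cast (show _ < N by omega)
    · simp only [LinearMap.mulLeft_apply]
      rw [e1, e2]
      have p1 : f ^ (L + M) = f ^ (L - (k : ℕ)) * f ^ M * f ^ (k : ℕ) := by
        rw [← pow_add, ← pow_add]; congr 1; have := k.2; omega
      have p2 : f ^ (L + M) = f ^ (L + M - (k : ℕ)) * f ^ (k : ℕ) := by
        rw [← pow_add]; congr 1; have := k.2; omega
      have : f ^ (L + M) * ((h1 + C c * h2) * (X - C t) ^ (j : ℕ)) =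
        (f ^ (L + M) * h1 + C c * (f ^ (L + M) * h2)) * (X - C t) ^ (j : ℕ) := by ring
      rw [this]
      nth_rewrite 1 [p1]
      rw [p2]
      ring
  let U : ((Fin J → degreeLT F n) × (Fin J → degreeLT F n)) →ₗ[F] (Fin L → W) := LinearMap.pi fun k => (T k).codRestrict W (hT k)
  have hW : Module.finrank F W ≤ N := by
    refine (Submodule.finrank_map_le _ _).trans ?_
    rw [finrank_degreeLT]
  have hlt : Module.finrank F (Fin L → W) < Module.finrank F ((Fin J → degreeLT F n) × (Fin J → degreeLT F n)) := by
    rw [Module.finrank_pi_fintype, Module.finrank_prod, Module.finrank_pi_fintype]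
    simp only [finrank_degreeLT, Finset.sum_const, Finset.card_univ, Fintype.card_fin, smul_eq_mul]
    have := Nat.mul_le_mul_left L hW
    linarith
  have hker := LinearMap.ker_ne_bot_of_finrank_lt (f := U) hlt
  obtain ⟨v, hv, hv0⟩ := (Submodule.ne_bot_iff _).1 hker
  refine ⟨fun j => v.1 j, fun j => v.2 j, fun j => mem_degreeLT.1 (v.1 j).2,
    fun j => mem_degreeLT.1 (v.2 j).2, ?_, ?_⟩
  · by_contra hcon
    push Not at hcon
    apply hv0
    ext j : 3
    · exact (hcon j).1
    · exact (hcon j).2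
  · intro k hk
    have h1 : T k v = 0 := by
      have := congrFun (LinearMap.mem_ker.1 hv) ⟨k, hk⟩
      exact congrArg Subtype.val this
    have h2 : (∑ j : Fin J, (hasseDeriv k (f ^ L * (v.1 j : F[X])) * f ^ M +
        C c * hasseDeriv k (f ^ (L + M) * (v.2 j : F[X]))) * (X - C t) ^ (j : ℕ)) * f ^ k = 0 := by
      rw [Finset.sum_mul]; exact h1
    exact (mul_eq_zero.1 h2).resolve_right (pow_ne_zero _ hf)

/-- nonvanishing of the auxiliary polynomial -/
lemma aux_ne_zero (f : F[X]) (t : F) (ht : f.eval t ≠ 0)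
    (hns : ∀ (r s : F[X]) (v : F), v ≠ 0 → f * r ^ 2 = C v * s ^ 2 → r = 0)
    (M n : ℕ) (hM : 2 * M + 1 = Fintype.card F) (hn : 2 * n + f.natDegree < Fintype.card F + 2)
    (hn0 : 0 < n) :
    ∀ (J : ℕ) (r s : ℕ → F[X]), (∀ j, (r j).degree < n) → (∀ j, (s j).degree < n) →
      (∑ j ∈ Finset.range J, (r j + f ^ M * s j) * ((X - C t) ^ (Fintype.card F)) ^ j = 0) →
      ∀ j < J, r j = 0 ∧ s j = 0 := by
  set Y : F[X] := (X - C t) ^ (Fintype.card F) with hY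
  have hY0 : Y ≠ 0 := pow_ne_zero _ (X_sub_C_ne_zero t)
  have hf0 : f ≠ 0 := by rintro rfl; simp at ht
  intro J
  induction J with
  | zero => intro r s _ _ _ j hj; omega
  | succ J ih =>
    intro r s hr hs h
    have key : r 0 = 0 ∧ s 0 = 0 := by
      rw [Finset.sum_range_succ'] at h
      simp only [pow_zero, mul_one, pow_succ, ← mul_assoc] at h
      rw [← Finset.sum_mul] at h
      set Z := ∑ j ∈ Finset.range J, (r (j + 1) + f ^ M * s (j + 1)) * Y ^ j with hZ
      have e1 : Y ∣ r 0 + f ^ M * s 0 := ⟨-Z, by linear_combination h⟩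
      have e2 : Y ∣ f * r 0 ^ 2 - f ^ (Fintype.card F) * s 0 ^ 2 := by
        rw [← hM]
        have : f * r 0 ^ 2 - f ^ (2 * M + 1) * s 0 ^ 2 =
          (r 0 + f ^ M * s 0) * (f * (r 0 - f ^ M * s 0)) := by ring
        rw [this]; exact e1.mul_right _
      have e3 : Y ∣ f ^ (Fintype.card F) - C (f.eval t) := by
        rw [pow_card_sub]
        exact pow_dvd_pow_of_dvd (dvd_iff_isRoot.2 (by simp)) _
      have e4 : Y ∣ f * r 0 ^ 2 - C (f.eval t) * s 0 ^ 2 := by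
        have := dvd_add e2 (e3.mul_right (s 0 ^ 2))
        convert this using 1; ring
      have b1 : (r 0).natDegree ≤ n - 1 :=
        Nat.le_sub_one_of_lt (natDegree_lt_of_deg hn0 (hr 0))
      have b2 : (s 0).natDegree ≤ n - 1 :=
        Nat.le_sub_one_of_lt (natDegree_lt_of_deg hn0 (hs 0))
      have e5 : f * r 0 ^ 2 - C (f.eval t) * s 0 ^ 2 = 0 := by
        apply eq_zero_of_dvd_of_natDegree_lt e4
        rw [hY, natDegree_pow, natDegree_X_sub_C, mul_one]
        refine lt_of_le_of_lt (natDegree_sub_le _ _) (max_lt ?_ ?_)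
        · refine lt_of_le_of_lt natDegree_mul_le ?_
          have := natDegree_pow_le (p := r 0) (n := 2)
          omega
        · refine lt_of_le_of_lt (natDegree_C_mul_le _ _) ?_
          have := natDegree_pow_le (p := s 0) (n := 2)
          omega
      have r0 := hns _ _ _ ht (sub_eq_zero.1 e5)
      refine ⟨r0, ?_⟩
      rw [r0] at e5
      simpa [ht] using e5
    have h' : ∑ j ∈ Finset.range J, (r (j+1) + f ^ M * s (j+1)) * Y ^ j = 0 := by
      rw [Finset.sum_range_succ'] at h
      simp only [key.1, key.2, pow_succ, ← mul_assoc] at h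
      rw [← Finset.sum_mul] at h
      simpa [hY0] using h
    intro j hj
    cases j with
    | zero => exact key
    | succ j => exact ih (fun j => r (j+1)) (fun j => s (j+1)) (fun j => hr _) (fun j => hs _) h' j (by omega)

lemma card_le_of_dvd (R : F[X]) (hR : R ≠ 0) (L : ℕ) (S : Finset F)
    (h : ∀ x ∈ S, ∀ k < L, (hasseDeriv k R).eval x = 0) : L * S.card ≤ R.natDegree := by
  have h1 : ∀ x ∈ S, (X - C x) ^ L ∣ R := by
    intro x hx
    rw [X_sub_C_pow_dvd_iff, X_pow_dvd_iff, ← taylor_apply]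
    intro k hk
    rw [taylor_coeff]
    exact h x hx k hk
  have h2 : ∏ x ∈ S, (X - C x) ^ L ∣ R := by
    apply Finset.prod_dvd_of_coprime _ h1
    intro x _ y _ hxy
    exact (pairwise_coprime_X_sub_C (s := (id : F → F)) Function.injective_id hxy).pow
  have h3 := natDegree_le_of_dvd h2 hR
  rw [natDegree_prod_of_monic _ _ (fun x _ => (monic_X_sub_C x).pow L)] at h3
  simp only [natDegree_pow, natDegree_X_sub_C, mul_one, Finset.sum_const, smul_eq_mul] at h3
  linarith

/-- raw Stepanov estimate -/
lemma stepanov_raw (f : F[X]) (t c : F) (ht : f.eval t ≠ 0) (hc : c * c = 1)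
    (hns : ∀ (r s : F[X]) (v : F), v ≠ 0 → f * r ^ 2 = C v * s ^ 2 → r = 0)
    (L M n J : ℕ) (hM : 2 * M + 1 = Fintype.card F)
    (hn : 2 * n + f.natDegree < Fintype.card F + 2)
    (hn0 : 0 < n) (hL : L ≤ Fintype.card F)
    (hdim : L * (n + L * f.natDegree + J) < 2 * J * n) (S : Finset F)
    (hS : ∀ x ∈ S, f.eval x ^ M = c) :
    L * S.card ≤ (L + M) * f.natDegree + n + J * Fintype.card F := by
  have hf : f ≠ 0 := by rintro rfl; simp at ht
  obtain ⟨r, s, hr, hs, ⟨j0, hj0⟩, hz⟩ := exists_aux f hf t c L M n J _ le_rfl hdim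
  set Y : F[X] := (X - C t) ^ (Fintype.card F) with hY
  set R : F[X] := ∑ j : Fin J, (f ^ L * r j + f ^ (L + M) * s j) * Y ^ (j : ℕ) with hRdef
  have hR : R ≠ 0 := by
    intro hR0
    let r' : ℕ → F[X] := fun j => if h : j < J then r ⟨j, h⟩ else 0
    let s' : ℕ → F[X] := fun j => if h : j < J then s ⟨j, h⟩ else 0
    have hr' : ∀ j, (r' j).degree < n := by
      intro j
      by_cases h : j < J
      · simp only [r', dif_pos h]; exact hr _
      · simp only [r', dif_neg h, degree_zero]; exact WithBot.bot_lt_coe _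
    have hs' : ∀ j, (s' j).degree < n := by
      intro j
      by_cases h : j < J
      · simp only [s', dif_pos h]; exact hs _
      · simp only [s', dif_neg h, degree_zero]; exact WithBot.bot_lt_coe _
    have e : ∑ j ∈ Finset.range J, (r' j + f ^ M * s' j) * Y ^ j = 0 := by
      have : f ^ L * ∑ j ∈ Finset.range J, (r' j + f ^ M * s' j) * Y ^ j = R := by
        rw [hRdef, Finset.mul_sum, Finset.sum_range]
        refine Finset.sum_congr rfl fun j _ => ?_
        simp only [r', s', j.2, dif_pos]
        ring
      rw [hR0] at this
      exact (mul_eq_zero.1 this).resolve_left (pow_ne_zero _ hf)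
    have := aux_ne_zero f t ht hns M n hM hn hn0 J r' s' hr' hs' e j0 j0.2
    simp only [r', s', j0.2, dif_pos] at this
    rcases hj0 with h | h
    · exact h this.1
    · exact h this.2
  have hroot : ∀ x ∈ S, ∀ k < L, (hasseDeriv k R).eval x = 0 := by
    intro x hx k hk
    have hx' := hS x hx
    have e1 := congrArg (eval x) (hz k hk)
    have e2 : (hasseDeriv k R).eval x = c * eval x (∑ j : Fin J, (hasseDeriv k (f ^ L * r j) * f ^ M +
        C c * hasseDeriv k (f ^ (L + M) * s j)) * (X - C t) ^ (j : ℕ)) := by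
      rw [hRdef, map_sum, eval_finsetSum, eval_finsetSum, Finset.mul_sum]
      refine Finset.sum_congr rfl fun j _ => ?_
      rw [hY, hasseDeriv_mul_Y_pow _ _ (by omega), map_add]
      simp only [eval_mul, eval_add, eval_pow, eval_sub, eval_X, eval_C, FiniteField.pow_card]
      rw [hx']
      linear_combination (-(eval x ((hasseDeriv k) (f ^ L * r j)) +
        eval x ((hasseDeriv k) (f ^ (L + M) * s j))) * (x - t) ^ (j : ℕ)) * hc
    rw [e2, e1]; simp
  refine (card_le_of_dvd R hR L S hroot).trans ?_
  apply natDegree_sum_le_of_forall_le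
  intro j _
  have b1 : (r j).natDegree ≤ n :=
    (natDegree_lt_of_deg hn0 (hr j)).le
  have b2 : (s j).natDegree ≤ n :=
    (natDegree_lt_of_deg hn0 (hs j)).le
  refine natDegree_mul_le.trans (add_le_add ?_ ?_)
  · refine (natDegree_add_le _ _).trans (max_le ?_ ?_)
    · refine natDegree_mul_le.trans (add_le_add ?_ b1)
      rw [natDegree_pow]; exact Nat.mul_le_mul_right _ (by omega)
    · refine natDegree_mul_le.trans (add_le_add ?_ b2)
      rw [natDegree_pow]
  · rw [hY, ← pow_mul, natDegree_pow, natDegree_X_sub_C, mul_one, mul_comm]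
    exact Nat.mul_le_mul_right _ j.2.le


lemma card_pow_le (f : F[X]) (c : F) (hc : c * c = 1) (hd : f.natDegree ≤ 18) (hf : f ≠ 0)
    (hns : ∀ (r s : F[X]) (v : F), v ≠ 0 → f * r ^ 2 = C v * s ^ 2 → r = 0)
    (hodd : Fintype.card F % 2 = 1) (hq : 2518 ^ 2 ≤ Fintype.card F) (S : Finset F)
    (hS : ∀ x ∈ S, f.eval x ^ (Fintype.card F / 2) = c) :
    2 * S.card ≤ Fintype.card F + 60 * Nat.sqrt (Fintype.card F) + 156 := by
  obtain ⟨t, ht⟩ : ∃ t, f.eval t ≠ 0 := by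
    by_contra hcon
    push Not at hcon
    have h1 : Fintype.card F ≤ f.natDegree := by
      have h2 := Polynomial.card_roots' f
      have h3 : (Finset.univ : Finset F) ⊆ f.roots.toFinset := by
        intro x _
        simp [hf, hcon x]
      have h4 := Finset.card_le_card h3
      have h5 := Multiset.toFinset_card_le f.roots
      rw [Finset.card_univ] at h4
      omega
    omega
  set q := Fintype.card F with hqdef
  set L := Nat.sqrt q with hLdef
  have hL1 : L * L ≤ q := Nat.sqrt_le q
  have hL2 : q < (L + 1) * (L + 1) := Nat.lt_succ_sqrt q
  have hL3 : 2518 ≤ L := by rw [hLdef, Nat.le_sqrt]; omega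
  obtain ⟨n, hn⟩ : ∃ n, 2 * n + 17 = q := ⟨(q - 17) / 2, by omega⟩
  obtain ⟨J, hJ1, hJ2⟩ : ∃ J, L + 40 ≤ 2 * J ∧ 2 * J ≤ L + 41 := ⟨(L + 1) / 2 + 20, by omega, by omega⟩
  obtain ⟨M, hM⟩ : ∃ M, 2 * M + 1 = q := ⟨(q - 1) / 2, by omega⟩
  have hM' : q / 2 = M := by omega
  rw [hM'] at hS
  have hLd : L * f.natDegree ≤ L * 18 := Nat.mul_le_mul_left _ hd
  have hdim : L * (n + L * f.natDegree + J) < 2 * J * n := by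
    have h1 : L * (n + L * f.natDegree + J) ≤ L * (n + L * 18 + J) :=
      Nat.mul_le_mul_left _ (by omega)
    have h2 : (L + 40) * (2 * n) ≤ 2 * J * (2 * n) := Nat.mul_le_mul_right _ hJ1
    have h3 : L * (2 * J) ≤ L * (L + 41) := Nat.mul_le_mul_left _ hJ2
    nlinarith
  have key := stepanov_raw f t c ht hc hns L M n J (by omega) (by omega) (by omega)
    (by nlinarith) hdim S hS
  rw [← hqdef] at key
  have h1 : (L + M) * f.natDegree ≤ (L + M) * 18 := Nat.mul_le_mul_left _ hd
  have h2 : 2 * J * q ≤ (L + 41) * q := Nat.mul_le_mul_right _ hJ2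
  have h3 : L * (2 * S.card) ≤ L * (q + 60 * L + 156) := by nlinarith
  exact Nat.le_of_mul_le_mul_left h3 (by omega)

/-- Weil-type bound for quadratic character sums, with a weak constant. -/
theorem char_sum_bound (f : F[X]) (hd : f.natDegree ≤ 18) (hf : f ≠ 0)
    (hns : ∀ (r s : F[X]) (v : F), v ≠ 0 → f * r ^ 2 = C v * s ^ 2 → r = 0)
    (hodd : Fintype.card F % 2 = 1) (hq : 2518 ^ 2 ≤ Fintype.card F) :
    |∑ x : F, ((quadraticChar F (f.eval x) : ℤ) : ℝ)| ≤ 61 * √(Fintype.card F : ℝ) := by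
  have hF : ringChar F ≠ 2 := fun h => by
    have := FiniteField.even_card_iff_char_two.1 h; omega
  set q := Fintype.card F with hqdef
  set S1 := Finset.univ.filter (fun x : F => f.eval x ^ (q / 2) = 1) with hS1
  set S2 := Finset.univ.filter (fun x : F => f.eval x ^ (q / 2) = -1) with hS2
  set S0 := Finset.univ.filter (fun x : F => f.eval x = 0) with hS0
  have h1 := card_pow_le f 1 (by ring) hd hf hns hodd hq S1 (by intro x hx; simpa [hS1] using hx)
  have h2 := card_pow_le f (-1) (by ring) hd hf hns hodd hq S2
    (by intro x hx; simpa [hS2] using hx)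
  have h0 : S0.card ≤ 18 := by
    have h3 : S0 ⊆ f.roots.toFinset := by
      intro x hx
      simpa [hf, hS0] using hx
    have h4 := Finset.card_le_card h3
    have h5 := Multiset.toFinset_card_le f.roots
    have h6 := Polynomial.card_roots' f
    omega
  have hne : (1 : F) ≠ -1 := fun h => Ring.neg_one_ne_one_of_char_ne_two hF h.symm
  have hpos : q / 2 ≠ 0 := by omega
  have hpt : ∀ x : F, ((quadraticChar F (f.eval x) : ℤ) : ℝ) =
      (if f.eval x ^ (q / 2) = 1 then 1 else 0) - (if f.eval x ^ (q / 2) = -1 then 1 else 0) ∧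
      (1 : ℝ) = (if f.eval x ^ (q / 2) = 1 then 1 else 0) + (if f.eval x ^ (q / 2) = -1 then 1 else 0)
        + (if f.eval x = 0 then 1 else 0) := by
    intro x
    by_cases hx : f.eval x = 0
    · simp [hx, hpos]
    · rw [quadraticChar_eq_pow_of_char_ne_two hF hx]
      rcases FiniteField.pow_dichotomy hF hx with h | h
      · rw [← hqdef] at h ⊢
        simp [h, hne, hx]
      · rw [← hqdef] at h ⊢
        simp [h, hne.symm, hx]
  have hsum : ∑ x : F, ((quadraticChar F (f.eval x) : ℤ) : ℝ) = (S1.card : ℝ) - S2.card := by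
    rw [Finset.sum_congr rfl fun x _ => (hpt x).1, Finset.sum_sub_distrib, Finset.sum_boole,
      Finset.sum_boole]
  have htot : (q : ℝ) = S1.card + S2.card + S0.card := by
    have : (q : ℝ) = ∑ x : F, (1 : ℝ) := by simp [hqdef]
    rw [this, Finset.sum_congr rfl fun x _ => (hpt x).2, Finset.sum_add_distrib,
      Finset.sum_add_distrib, Finset.sum_boole, Finset.sum_boole, Finset.sum_boole]
  have hs : (Nat.sqrt q : ℝ) ≤ √(q : ℝ) := Real.nat_sqrt_le_real_sqrt
  have hs3 : 2518 ≤ Nat.sqrt q := by rw [Nat.le_sqrt]; omega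
  have hs3' : (2518 : ℝ) ≤ Nat.sqrt q := by exact_mod_cast hs3
  have h1' : 2 * (S1.card : ℝ) ≤ q + 60 * Nat.sqrt q + 156 := by exact_mod_cast h1
  have h2' : 2 * (S2.card : ℝ) ≤ q + 60 * Nat.sqrt q + 156 := by exact_mod_cast h2
  have h0' : (S0.card : ℝ) ≤ 18 := by exact_mod_cast h0
  rw [hsum, abs_le]
  constructor <;> linarith

end Stepanov

namespace Fourier

def sg (e : Bool) : ℝ := if e then 1 else -1

lemma sg_mul_self (e : Bool) : sg e * sg e = 1 := by cases e <;> simp [sg]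

variable {ι : Type*} [Fintype ι]

def ext (Φ : (ι → Bool) → ℝ) (x : ι → ℝ) : ℝ :=
  ∑ ε : ι → Bool, Φ ε * ∏ i, ((1 + sg (ε i) * x i) / 2)

def coef (Φ : (ι → Bool) → ℝ) (T : Finset ι) : ℝ := ∑ ε : ι → Bool, Φ ε * ∏ i ∈ T, sg (ε i)

lemma prod_half (ε ε' : ι → Bool) :
    ∏ i, (1 + sg (ε i) * sg (ε' i)) = if ε = ε' then (2 : ℝ) ^ (Fintype.card ι) else 0 := by
  split_ifs with h
  · subst h
    rw [Finset.prod_congr rfl fun i _ => by rw [sg_mul_self], Finset.prod_const, Finset.card_univ]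
    norm_num
  · obtain ⟨i, hi⟩ := Function.ne_iff.1 h
    apply Finset.prod_eq_zero (Finset.mem_univ i)
    cases h1 : ε i <;> cases h2 : ε' i <;> simp_all [sg]

lemma ext_sg (Φ : (ι → Bool) → ℝ) (ε : ι → Bool) : ext Φ (fun i => sg (ε i)) = Φ ε := by
  unfold ext
  rw [Finset.sum_eq_single ε]
  · rw [Finset.prod_div_distrib, prod_half, if_pos rfl]
    simp
  · intro ε' _ h
    rw [Finset.prod_div_distrib, prod_half, if_neg h]
    simp
  · simp

lemma sum_prod_half (x : ι → ℝ) : ∑ ε : ι → Bool, ∏ i, ((1 + sg (ε i) * x i) / 2) = 1 := by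
  have := Finset.prod_univ_sum (fun _ : ι => (Finset.univ : Finset Bool))
    (fun i e => (1 + sg e * x i) / 2)
  rw [Fintype.piFinset_univ] at this
  rw [← this]
  apply Finset.prod_eq_one
  intro i _
  simp [sg]
  ring

lemma ext_mem (Φ : (ι → Bool) → ℝ) (h0 : ∀ ε, 0 ≤ Φ ε) (h1 : ∀ ε, Φ ε ≤ 1) (x : ι → ℝ)
    (hx : ∀ i, |x i| ≤ 1) : 0 ≤ ext Φ x ∧ ext Φ x ≤ 1 := by
  have hp : ∀ ε : ι → Bool, 0 ≤ ∏ i, ((1 + sg (ε i) * x i) / 2) := by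
    intro ε
    apply Finset.prod_nonneg
    intro i _
    have := abs_le.1 (hx i)
    cases ε i <;> simp [sg] <;> linarith
  constructor
  · exact Finset.sum_nonneg fun ε _ => mul_nonneg (h0 ε) (hp ε)
  · rw [← sum_prod_half x]
    exact Finset.sum_le_sum fun ε _ => mul_le_of_le_one_left (hp ε) (h1 ε)

lemma ext_eq (Φ : (ι → Bool) → ℝ) (x : ι → ℝ) :
    ext Φ x = (∑ T : Finset ι, coef Φ T * ∏ i ∈ T, x i) / 2 ^ (Fintype.card ι) := by
  unfold ext coef
  simp only [Finset.prod_div_distrib, Finset.prod_const, Finset.card_univ, Finset.prod_one_add,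
    Finset.powerset_univ, Finset.prod_mul_distrib]
  rw [Finset.sum_div]
  simp only [Finset.sum_mul, Finset.sum_div, Finset.mul_sum]
  rw [Finset.sum_comm]
  refine Finset.sum_congr rfl fun T _ => Finset.sum_congr rfl fun ε _ => ?_
  ring

lemma parseval (Φ : (ι → Bool) → ℝ) :
    ∑ T : Finset ι, coef Φ T ^ 2 = 2 ^ (Fintype.card ι) * ∑ ε, Φ ε ^ 2 := by
  have h1 : ∀ T : Finset ι, coef Φ T ^ 2 =
      ∑ ε : ι → Bool, ∑ ε' : ι → Bool, Φ ε * Φ ε' * ∏ i ∈ T, sg (ε i) * sg (ε' i) := by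
    intro T
    unfold coef
    rw [sq, Finset.sum_mul_sum]
    refine Finset.sum_congr rfl fun ε _ => Finset.sum_congr rfl fun ε' _ => ?_
    rw [Finset.prod_mul_distrib]; ring
  simp only [h1]
  rw [Finset.sum_comm, Finset.mul_sum]
  refine Finset.sum_congr rfl fun ε _ => ?_
  rw [Finset.sum_comm]
  have h2 : ∀ ε' : ι → Bool, ∑ T : Finset ι, Φ ε * Φ ε' * ∏ i ∈ T, sg (ε i) * sg (ε' i) =
      Φ ε * Φ ε' * if ε = ε' then (2 : ℝ) ^ (Fintype.card ι) else 0 := by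
    intro ε'
    rw [← Finset.mul_sum, ← prod_half, Finset.prod_one_add, Finset.powerset_univ]
  simp only [h2]
  simp
  ring

lemma coef_l1 (Φ : (ι → Bool) → ℝ) :
    ∑ T : Finset ι, |coef Φ T| ≤ 2 ^ (Fintype.card ι) * √(∑ ε, Φ ε ^ 2) := by
  have h := sq_sum_le_card_mul_sum_sq (s := (Finset.univ : Finset (Finset ι)))
    (f := fun T => |coef Φ T|)
  simp only [sq_abs, parseval, Finset.card_univ, Fintype.card_finset] at h
  push_cast at h
  have hn : (0 : ℝ) ≤ ∑ ε, Φ ε ^ 2 := Finset.sum_nonneg fun _ _ => sq_nonneg _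
  apply le_of_sq_le_sq _ (by positivity)
  rw [mul_pow, Real.sq_sqrt hn]
  calc _ ≤ _ := h
    _ = _ := by ring

theorem main_bound {B : Type*} [Fintype B] (Φ : (ι → Bool) → ℝ) (s : B → ι → ℝ) (M : ℝ)
    (hM0 : 0 ≤ M)
    (hM : ∀ T : Finset ι, T.Nonempty → |∑ b, ∏ i ∈ T, s b i| ≤ M) :
    |∑ b, ext Φ (s b) - Fintype.card B * ((∑ ε, Φ ε) / 2 ^ (Fintype.card ι))| ≤
      M * √(∑ ε, Φ ε ^ 2) := by
  have h1 : ∑ b, ext Φ (s b) =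
      (∑ T : Finset ι, coef Φ T * ∑ b, ∏ i ∈ T, s b i) / 2 ^ (Fintype.card ι) := by
    simp only [ext_eq]
    rw [← Finset.sum_div, Finset.sum_comm]
    simp only [Finset.mul_sum]
  have h2 : ∑ T : Finset ι, coef Φ T * ∑ b, ∏ i ∈ T, s b i =
      (∑ ε, Φ ε) * Fintype.card B +
        ∑ T ∈ Finset.univ.erase (∅ : Finset ι), coef Φ T * ∑ b, ∏ i ∈ T, s b i := by
    rw [← Finset.add_sum_erase _ _ (Finset.mem_univ (∅ : Finset ι))]
    simp [coef]
  have h3 : |∑ T ∈ Finset.univ.erase (∅ : Finset ι), coef Φ T * ∑ b, ∏ i ∈ T, s b i| ≤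
      M * (2 ^ (Fintype.card ι) * √(∑ ε, Φ ε ^ 2)) := by
    calc _ ≤ ∑ T ∈ Finset.univ.erase (∅ : Finset ι), |coef Φ T * ∑ b, ∏ i ∈ T, s b i| :=
          Finset.abs_sum_le_sum_abs _ _
      _ ≤ ∑ T ∈ Finset.univ.erase (∅ : Finset ι), |coef Φ T| * M := by
          refine Finset.sum_le_sum fun T hT => ?_
          rw [abs_mul]
          exact mul_le_mul_of_nonneg_left
            (hM T (Finset.nonempty_iff_ne_empty.2 (Finset.ne_of_mem_erase hT))) (abs_nonneg _)
      _ ≤ ∑ T : Finset ι, |coef Φ T| * M :=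
          Finset.sum_le_sum_of_subset_of_nonneg (Finset.erase_subset _ _)
            fun T _ _ => mul_nonneg (abs_nonneg _) hM0
      _ = M * ∑ T : Finset ι, |coef Φ T| := by rw [← Finset.sum_mul, mul_comm]
      _ ≤ _ := mul_le_mul_of_nonneg_left (coef_l1 Φ) hM0
  have hp : (0 : ℝ) < 2 ^ (Fintype.card ι) := by positivity
  rw [h1, h2]
  have h4 : ∀ A E : ℝ, (A * Fintype.card B + E) / 2 ^ (Fintype.card ι) -
      Fintype.card B * (A / 2 ^ (Fintype.card ι)) = E / 2 ^ (Fintype.card ι) := by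
    intro A E; ring
  rw [h4, abs_div, abs_of_pos hp, div_le_iff₀ hp]
  linarith

end Fourier

namespace Polys

section ring
variable {R : Type*} [CommRing R]

/-- the fourteen polynomials whose quadratic characters decide maximal nonassociativity -/
def ev (a b : R) : Fin 14 → R :=
  ![b,
    1 - b,
    a ^ 2 - 2 * a + b,
    b ^ 2 - 2 * b + a,
    b ^ 2 - a,
    a ^ 2 - b,
    a - b - a * b + a * b ^ 2,
    b - a - a * b + a ^ 2 * b,
    a - a * b - b ^ 2 + a * b ^ 2,
    b - a * b - a ^ 2 + a ^ 2 * b,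
    b - a - a * b,
    a - b - a * b,
    a * b - 2 * b + 1,
    a * b - 2 * a + 1]

/-- their derivatives with respect to the second variable -/
def dv (a b : R) : Fin 14 → R :=
  ![1,
    -1,
    1,
    2 * (1) * b + (-2),
    2 * (1) * b + (0),
    -1,
    2 * (a) * b + (-a - 1),
    a ^ 2 - a + 1,
    2 * (a - 1) * b + (-a),
    a ^ 2 - a + 1,
    -a + 1,
    -a - 1,
    a - 2,
    a]

/-- a polynomial vanishing at all exceptional values of the first variable -/
def gd (a : R) : R :=
  (a) *
  (a - 1) *
  (a + 1) *
  (a - 2) *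
  (2 * a - 1) *
  (3 * a - 2) *
  (3 * a - 1) *
  (3 * a + 1) *
  (3 * a - 4) *
  (a ^ 2 - a - 1) *
  (a ^ 2 + a - 1) *
  (a ^ 2 - 3 * a + 1) *
  (3 * a ^ 2 - 3 * a + 1) *
  (2 * a ^ 2 - 2 * a + 1) *
  (a ^ 2 - a + 1) *
  (a ^ 2 + 1) *
  (a ^ 2 + a + 1) *
  (a ^ 2 - 2 * a + 2) *
  (a ^ 2 - 3 * a + 3) *
  (a ^ 3 - a - 1) *
  (a ^ 3 + a ^ 2 - 1) *
  (a ^ 3 - a ^ 2 + 2 * a - 1) *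
  (a ^ 3 - 2 * a ^ 2 + 3 * a - 1) *
  (a ^ 3 - 4 * a ^ 2 + 5 * a - 1) *
  (-a ^ 3 + a ^ 2 - 2 * a + 1) *
  (-a ^ 3 + 2 * a ^ 2 - a + 1) *
  (a ^ 3 - a ^ 2 + 1) *
  (a ^ 3 - 3 * a ^ 2 + 2 * a + 1)

end ring

section field
variable {K : Type*} [Field K]

lemma gd_factors {a : K} (h : gd a ≠ 0) :
    a ≠ 0 ∧ a - 1 ≠ 0 ∧ a + 1 ≠ 0 ∧ a - 2 ≠ 0 ∧ 2 * a - 1 ≠ 0 ∧ 3 * a - 2 ≠ 0 ∧ 3 * a - 1 ≠ 0 ∧ 3 * a + 1 ≠ 0 ∧ 3 * a - 4 ≠ 0 ∧ a ^ 2 - a - 1 ≠ 0 ∧ a ^ 2 + a - 1 ≠ 0 ∧ a ^ 2 - 3 * a + 1 ≠ 0 ∧ 3 * a ^ 2 - 3 * a + 1 ≠ 0 ∧ 2 * a ^ 2 - 2 * a + 1 ≠ 0 ∧ a ^ 2 - a + 1 ≠ 0 ∧ a ^ 2 + 1 ≠ 0 ∧ a ^ 2 + a + 1 ≠ 0 ∧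 a ^ 2 - 2 * a + 2 ≠ 0 ∧ a ^ 2 - 3 * a + 3 ≠ 0 ∧ a ^ 3 - a - 1 ≠ 0 ∧ a ^ 3 + a ^ 2 - 1 ≠ 0 ∧ a ^ 3 - a ^ 2 + 2 * a - 1 ≠ 0 ∧ a ^ 3 - 2 * a ^ 2 + 3 * a - 1 ≠ 0 ∧ a ^ 3 - 4 * a ^ 2 + 5 * a - 1 ≠ 0 ∧ -a ^ 3 + a ^ 2 - 2 * a + 1 ≠ 0 ∧ -a ^ 3 + 2 * a ^ 2 - a + 1 ≠ 0 ∧ a ^ 3 - a ^ 2 + 1 ≠ 0 ∧ a ^ 3 - 3 * a ^ 2 + 2 * a + 1 ≠ 0 := by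
  unfold gd at h
  simp only [mul_ne_zero_iff, and_assoc] at h
  exact h

lemma ev_coprime_lt {a b : K} (h2 : (2 : K) ≠ 0) (hg : gd a ≠ 0) (i j : Fin 14) (hij : i < j)
    (hi : ev a b i = 0) (hj : ev a b j = 0) : False := by
  obtain ⟨g0, g1, g2, g3, g4, g5, g6, g7, g8, g9, g10, g11, g12, g13, g14, g15, g16, g17, g18, g19, g20, g21, g22, g23, g24, g25, g26, g27⟩ := gd_factors hg
  fin_cases i <;> fin_cases j <;> first | exact absurd hij (by decide) | skip
  · have hi1 : b = 0 := hi
    have hj1 : 1 - b = 0 := hj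
    have e : (1 : K) = 0 := by
      linear_combination ((1)) * hi1 + ((1)) * hj1
    exact one_ne_zero e
  · have hi1 : b = 0 := hi
    have hj1 : a ^ 2 - 2 * a + b = 0 := hj
    have e : ((a) * (a - 2) : K) = 0 := by
      linear_combination ((-1)) * hi1 + ((1)) * hj1
    exact (mul_ne_zero g0 g3) e
  · have hi1 : b = 0 := hi
    have hj1 : b ^ 2 - 2 * b + a = 0 := hj
    have e : ((a) : K) = 0 := by
      linear_combination ((-((1) * b + (-2)))) * hi1 + ((1)) * hj1
    exact g0 e
  · have hi1 : b = 0 := hi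
    have hj1 : b ^ 2 - a = 0 := hj
    have e : ((a) : K) = 0 := by
      linear_combination (-(-((1) * b + (0)))) * hi1 + (-(1)) * hj1
    exact g0 e
  · have hi1 : b = 0 := hi
    have hj1 : a ^ 2 - b = 0 := hj
    have e : ((a) * (a) : K) = 0 := by
      linear_combination ((1)) * hi1 + ((1)) * hj1
    exact (mul_ne_zero g0 g0) e
  · have hi1 : b = 0 := hi
    have hj1 : a - b - a * b + a * b ^ 2 = 0 := hj
    have e : ((a) : K) = 0 := by
      linear_combination ((-((a) * b + (-a - 1)))) * hi1 + ((1)) * hj1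
    exact g0 e
  · have hi1 : b = 0 := hi
    have hj1 : b - a - a * b + a ^ 2 * b = 0 := hj
    have e : ((a) : K) = 0 := by
      linear_combination (-(-a ^ 2 + a - 1)) * hi1 + (-(1)) * hj1
    exact g0 e
  · have hi1 : b = 0 := hi
    have hj1 : a - a * b - b ^ 2 + a * b ^ 2 = 0 := hj
    have e : ((a) : K) = 0 := by
      linear_combination ((-((a - 1) * b + (-a)))) * hi1 + ((1)) * hj1
    exact g0 e
  · have hi1 : b = 0 := hi
    have hj1 : b - a * b - a ^ 2 + a ^ 2 * b = 0 := hj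
    have e : ((a) * (a) : K) = 0 := by
      linear_combination (-(-a ^ 2 + a - 1)) * hi1 + (-(1)) * hj1
    exact (mul_ne_zero g0 g0) e
  · have hi1 : b = 0 := hi
    have hj1 : b - a - a * b = 0 := hj
    have e : ((a) : K) = 0 := by
      linear_combination (-(a - 1)) * hi1 + (-(1)) * hj1
    exact g0 e
  · have hi1 : b = 0 := hi
    have hj1 : a - b - a * b = 0 := hj
    have e : ((a) : K) = 0 := by
      linear_combination ((a + 1)) * hi1 + ((1)) * hj1
    exact g0 e
  · have hi1 : b = 0 := hi
    have hj1 : a * b - 2 * b + 1 = 0 := hj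
    have e : (1 : K) = 0 := by
      linear_combination ((-a + 2)) * hi1 + ((1)) * hj1
    exact one_ne_zero e
  · have hi1 : b = 0 := hi
    have hj1 : a * b - 2 * a + 1 = 0 := hj
    have e : ((2 * a - 1) : K) = 0 := by
      linear_combination (-(-a)) * hi1 + (-(1)) * hj1
    exact g4 e
  · have hi1 : 1 - b = 0 := hi
    have hj1 : a ^ 2 - 2 * a + b = 0 := hj
    have e : ((a - 1) * (a - 1) : K) = 0 := by
      linear_combination (-(-1)) * hi1 + (-(-1)) * hj1
    exact (mul_ne_zero g1 g1) e
  · have hi1 : 1 - b = 0 := hi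
    have hj1 : b ^ 2 - 2 * b + a = 0 := hj
    have e : ((a - 1) : K) = 0 := by
      linear_combination ((-((-1) * b + (1)))) * hi1 + ((1)) * hj1
    exact g1 e
  · have hi1 : 1 - b = 0 := hi
    have hj1 : b ^ 2 - a = 0 := hj
    have e : ((a - 1) : K) = 0 := by
      linear_combination (-(-((-1) * b + (-1)))) * hi1 + (-(1)) * hj1
    exact g1 e
  · have hi1 : 1 - b = 0 := hi
    have hj1 : a ^ 2 - b = 0 := hj
    have e : ((a - 1) * (a + 1) : K) = 0 := by
      linear_combination (-(1)) * hi1 + (-(-1)) * hj1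
    exact (mul_ne_zero g1 g2) e
  · have hi1 : 1 - b = 0 := hi
    have hj1 : a - b - a * b + a * b ^ 2 = 0 := hj
    have e : ((a - 1) : K) = 0 := by
      linear_combination ((-((-a) * b + (1)))) * hi1 + ((1)) * hj1
    exact g1 e
  · have hi1 : 1 - b = 0 := hi
    have hj1 : b - a - a * b + a ^ 2 * b = 0 := hj
    have e : ((a - 1) * (a - 1) : K) = 0 := by
      linear_combination (-(-a ^ 2 + a - 1)) * hi1 + (-(-1)) * hj1
    exact (mul_ne_zero g1 g1) e
  · have hi1 : 1 - b = 0 := hi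
    have hj1 : a - a * b - b ^ 2 + a * b ^ 2 = 0 := hj
    have e : ((a - 1) : K) = 0 := by
      linear_combination ((-((-a + 1) * b + (1)))) * hi1 + ((1)) * hj1
    exact g1 e
  · have hi1 : 1 - b = 0 := hi
    have hj1 : b - a * b - a ^ 2 + a ^ 2 * b = 0 := hj
    have e : ((a - 1) : K) = 0 := by
      linear_combination ((-a ^ 2 + a - 1)) * hi1 + ((-1)) * hj1
    exact g1 e
  · have hi1 : 1 - b = 0 := hi
    have hj1 : b - a - a * b = 0 := hj
    have e : ((2 * a - 1) : K) = 0 := by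
      linear_combination ((a - 1)) * hi1 + ((-1)) * hj1
    exact g4 e
  · have hi1 : 1 - b = 0 := hi
    have hj1 : a - b - a * b = 0 := hj
    have e : (1 : K) = 0 := by
      linear_combination ((a + 1)) * hi1 + ((-1)) * hj1
    exact one_ne_zero e
  · have hi1 : 1 - b = 0 := hi
    have hj1 : a * b - 2 * b + 1 = 0 := hj
    have e : ((a - 1) : K) = 0 := by
      linear_combination (-(-a + 2)) * hi1 + (-(-1)) * hj1
    exact g1 e
  · have hi1 : 1 - b = 0 := hi
    have hj1 : a * b - 2 * a + 1 = 0 := hj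
    have e : ((a - 1) : K) = 0 := by
      linear_combination ((-a)) * hi1 + ((-1)) * hj1
    exact g1 e
  · have hi1 : a ^ 2 - 2 * a + b = 0 := hi
    have hj1 : b ^ 2 - 2 * b + a = 0 := hj
    have e : ((a) * (a - 1) * (a ^ 2 - 3 * a + 3) : K) = 0 := by
      linear_combination ((-((1) * b + (-a ^ 2 + 2 * a - 2)))) * hi1 + ((1)) * hj1
    exact (mul_ne_zero (mul_ne_zero g0 g1) g18) e
  · have hi1 : a ^ 2 - 2 * a + b = 0 := hi
    have hj1 : b ^ 2 - a = 0 := hj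
    have e : ((a) * (a - 1) * (a ^ 2 - 3 * a + 1) : K) = 0 := by
      linear_combination ((-((1) * b + (-a ^ 2 + 2 * a)))) * hi1 + ((1)) * hj1
    exact (mul_ne_zero (mul_ne_zero g0 g1) g11) e
  · have hi1 : a ^ 2 - 2 * a + b = 0 := hi
    have hj1 : a ^ 2 - b = 0 := hj
    have e : (2 * (a) * (a - 1) : K) = 0 := by
      linear_combination ((1)) * hi1 + ((1)) * hj1
    exact (mul_ne_zero (mul_ne_zero h2 g0) g1) e
  · have hi1 : a ^ 2 - 2 * a + b = 0 := hi
    have hj1 : a - b - a * b + a * b ^ 2 = 0 := hj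
    have e : ((a) * (a - 1) * (a ^ 3 - 3 * a ^ 2 + 2 * a + 1) : K) = 0 := by
      linear_combination ((-((a) * b + (-a ^ 3 + 2 * a ^ 2 - a - 1)))) * hi1 + ((1)) * hj1
    exact (mul_ne_zero (mul_ne_zero g0 g1) g27) e
  · have hi1 : a ^ 2 - 2 * a + b = 0 := hi
    have hj1 : b - a - a * b + a ^ 2 * b = 0 := hj
    have e : ((a) * (a - 1) * (a - 1) * (a - 1) : K) = 0 := by
      linear_combination (-(-a ^ 2 + a - 1)) * hi1 + (-(1)) * hj1
    exact (mul_ne_zero (mul_ne_zero (mul_ne_zero g0 g1) g1) g1) e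
  · have hi1 : a ^ 2 - 2 * a + b = 0 := hi
    have hj1 : a - a * b - b ^ 2 + a * b ^ 2 = 0 := hj
    have e : ((a) * (a - 1) * (a ^ 3 - 4 * a ^ 2 + 5 * a - 1) : K) = 0 := by
      linear_combination ((-((a - 1) * b + (-a ^ 3 + 3 * a ^ 2 - 3 * a)))) * hi1 + ((1)) * hj1
    exact (mul_ne_zero (mul_ne_zero g0 g1) g23) e
  · have hi1 : a ^ 2 - 2 * a + b = 0 := hi
    have hj1 : b - a * b - a ^ 2 + a ^ 2 * b = 0 := hj
    have e : ((a) * (a - 1) * (a ^ 2 - 2 * a + 2) : K) = 0 := by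
      linear_combination (-(-a ^ 2 + a - 1)) * hi1 + (-(1)) * hj1
    exact (mul_ne_zero (mul_ne_zero g0 g1) g17) e
  · have hi1 : a ^ 2 - 2 * a + b = 0 := hi
    have hj1 : b - a - a * b = 0 := hj
    have e : ((a) * (a ^ 2 - 3 * a + 1) : K) = 0 := by
      linear_combination ((a - 1)) * hi1 + ((1)) * hj1
    exact (mul_ne_zero g0 g11) e
  · have hi1 : a ^ 2 - 2 * a + b = 0 := hi
    have hj1 : a - b - a * b = 0 := hj
    have e : ((a) * (a ^ 2 - a - 1) : K) = 0 := by
      linear_combination ((a + 1)) * hi1 + ((1)) * hj1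
    exact (mul_ne_zero g0 g9) e
  · have hi1 : a ^ 2 - 2 * a + b = 0 := hi
    have hj1 : a * b - 2 * b + 1 = 0 := hj
    have e : ((a - 1) * (a ^ 2 - 3 * a + 1) : K) = 0 := by
      linear_combination (-(-a + 2)) * hi1 + (-(1)) * hj1
    exact (mul_ne_zero g1 g11) e
  · have hi1 : a ^ 2 - 2 * a + b = 0 := hi
    have hj1 : a * b - 2 * a + 1 = 0 := hj
    have e : ((a - 1) * (a ^ 2 - a + 1) : K) = 0 := by
      linear_combination (-(-a)) * hi1 + (-(1)) * hj1
    exact (mul_ne_zero g1 g14) e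
  · have hi1 : b ^ 2 - 2 * b + a = 0 := hi
    have hj1 : b ^ 2 - a = 0 := hj
    have e : (2 * 2 * (a) * (a - 1) : K) = 0 := by
      linear_combination ((-(-2 * a) + (2) * b + (0))) * hi1 + (((-2 * a) - (2) * b - (-4))) * hj1
    exact (mul_ne_zero (mul_ne_zero (mul_ne_zero h2 h2) g0) g1) e
  · have hi1 : b ^ 2 - 2 * b + a = 0 := hi
    have hj1 : a ^ 2 - b = 0 := hj
    have e : ((a) * (a - 1) * (a ^ 2 + a - 1) : K) = 0 := by
      linear_combination ((1)) * hi1 + ((-((-1) * b + (-a ^ 2 + 2)))) * hj1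
    exact (mul_ne_zero (mul_ne_zero g0 g1) g10) e
  · have hi1 : b ^ 2 - 2 * b + a = 0 := hi
    have hj1 : a - b - a * b + a * b ^ 2 = 0 := hj
    have e : ((a) * (a - 1) * (a - 1) * (a - 1) : K) = 0 := by
      linear_combination ((-(-a ^ 3 + a ^ 2) + (a ^ 2 - a) * b + (-a ^ 2 + 1))) * hi1 + (((-a ^ 2 + a) - (a - 1) * b - (-2 * a + 2))) * hj1
    exact (mul_ne_zero (mul_ne_zero (mul_ne_zero g0 g1) g1) g1) e
  · have hi1 : b ^ 2 - 2 * b + a = 0 := hi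
    have hj1 : b - a - a * b + a ^ 2 * b = 0 := hj
    have e : ((a) * (a - 1) * (a ^ 3 - a ^ 2 + 1) : K) = 0 := by
      linear_combination ((a ^ 4 - 2 * a ^ 3 + 3 * a ^ 2 - 2 * a + 1)) * hi1 + ((-((a ^ 2 - a + 1) * b + (-2 * a ^ 2 + 3 * a - 2)))) * hj1
    exact (mul_ne_zero (mul_ne_zero g0 g1) g26) e
  · have hi1 : b ^ 2 - 2 * b + a = 0 := hi
    have hj1 : a - a * b - b ^ 2 + a * b ^ 2 = 0 := hj
    have e : ((a) * (a - 1) * (a - 2) * (a - 2) : K) = 0 := by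
      linear_combination ((-(-a ^ 3 + 3 * a ^ 2 - 2 * a) + (a ^ 2 - 3 * a + 2) * b + (-a ^ 2 + 2 * a))) * hi1 + (((-a ^ 2 + 2 * a) - (a - 2) * b - (-2 * a + 4))) * hj1
    exact (mul_ne_zero (mul_ne_zero (mul_ne_zero g0 g1) g3) g3) e
  · have hi1 : b ^ 2 - 2 * b + a = 0 := hi
    have hj1 : b - a * b - a ^ 2 + a ^ 2 * b = 0 := hj
    have e : ((a) * (a - 1) * (a ^ 3 - 2 * a ^ 2 + 3 * a - 1) : K) = 0 := by
      linear_combination ((a ^ 4 - 2 * a ^ 3 + 3 * a ^ 2 - 2 * a + 1)) * hi1 + ((-((a ^ 2 - a + 1) * b + (-a ^ 2 + 2 * a - 2)))) * hj1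
    exact (mul_ne_zero (mul_ne_zero g0 g1) g22) e
  · have hi1 : b ^ 2 - 2 * b + a = 0 := hi
    have hj1 : b - a - a * b = 0 := hj
    have e : ((a) * (a ^ 2 + a - 1) : K) = 0 := by
      linear_combination ((a ^ 2 - 2 * a + 1)) * hi1 + ((-((-a + 1) * b + (3 * a - 2)))) * hj1
    exact (mul_ne_zero g0 g10) e
  · have hi1 : b ^ 2 - 2 * b + a = 0 := hi
    have hj1 : a - b - a * b = 0 := hj
    have e : ((a) * (a ^ 2 + a - 1) : K) = 0 := by
      linear_combination ((a ^ 2 + 2 * a + 1)) * hi1 + ((-((-a - 1) * b + (a + 2)))) * hj1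
    exact (mul_ne_zero g0 g10) e
  · have hi1 : b ^ 2 - 2 * b + a = 0 := hi
    have hj1 : a * b - 2 * b + 1 = 0 := hj
    have e : ((a - 1) * (a ^ 2 - 3 * a + 3) : K) = 0 := by
      linear_combination ((a ^ 2 - 4 * a + 4)) * hi1 + ((-((a - 2) * b + (-2 * a + 3)))) * hj1
    exact (mul_ne_zero g1 g18) e
  · have hi1 : b ^ 2 - 2 * b + a = 0 := hi
    have hj1 : a * b - 2 * a + 1 = 0 := hj
    have e : ((a - 1) * (a ^ 2 + a - 1) : K) = 0 := by
      linear_combination ((a ^ 2)) * hi1 + ((-((a) * b + (-1)))) * hj1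
    exact (mul_ne_zero g1 g10) e
  · have hi1 : b ^ 2 - a = 0 := hi
    have hj1 : a ^ 2 - b = 0 := hj
    have e : ((a) * (a - 1) * (a ^ 2 + a + 1) : K) = 0 := by
      linear_combination ((1)) * hi1 + ((-((-1) * b + (-a ^ 2)))) * hj1
    exact (mul_ne_zero (mul_ne_zero g0 g1) g16) e
  · have hi1 : b ^ 2 - a = 0 := hi
    have hj1 : a - b - a * b + a * b ^ 2 = 0 := hj
    have e : ((a) * (a - 1) * (a + 1) * (a + 1) : K) = 0 := by
      linear_combination ((-(a ^ 3 + a ^ 2) + (-a ^ 2 - a) * b + (a ^ 2 + 2 * a + 1))) * hi1 + (((a ^ 2 + a) - (-a - 1) * b - (0))) * hj1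
    exact (mul_ne_zero (mul_ne_zero (mul_ne_zero g0 g1) g2) g2) e
  · have hi1 : b ^ 2 - a = 0 := hi
    have hj1 : b - a - a * b + a ^ 2 * b = 0 := hj
    have e : ((a) * (a - 1) * (-a ^ 3 + a ^ 2 - 2 * a + 1) : K) = 0 := by
      linear_combination ((a ^ 4 - 2 * a ^ 3 + 3 * a ^ 2 - 2 * a + 1)) * hi1 + ((-((a ^ 2 - a + 1) * b + (a)))) * hj1
    exact (mul_ne_zero (mul_ne_zero g0 g1) g24) e
  · have hi1 : b ^ 2 - a = 0 := hi
    have hj1 : a - a * b - b ^ 2 + a * b ^ 2 = 0 := hj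
    have e : ((a) * (a) * (a) * (a - 1) : K) = 0 := by
      linear_combination ((-(a ^ 3 - a ^ 2) + (-a ^ 2 + a) * b + (a ^ 2))) * hi1 + (((a ^ 2) - (-a) * b - (0))) * hj1
    exact (mul_ne_zero (mul_ne_zero (mul_ne_zero g0 g0) g0) g1) e
  · have hi1 : b ^ 2 - a = 0 := hi
    have hj1 : b - a * b - a ^ 2 + a ^ 2 * b = 0 := hj
    have e : ((a) * (a - 1) * (-a ^ 3 + 2 * a ^ 2 - a + 1) : K) = 0 := by
      linear_combination ((a ^ 4 - 2 * a ^ 3 + 3 * a ^ 2 - 2 * a + 1)) * hi1 + ((-((a ^ 2 - a + 1) * b + (a ^ 2)))) * hj1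
    exact (mul_ne_zero (mul_ne_zero g0 g1) g25) e
  · have hi1 : b ^ 2 - a = 0 := hi
    have hj1 : b - a - a * b = 0 := hj
    have e : ((a) * (a ^ 2 - 3 * a + 1) : K) = 0 := by
      linear_combination (-(a ^ 2 - 2 * a + 1)) * hi1 + (-(-((-a + 1) * b + (a)))) * hj1
    exact (mul_ne_zero g0 g11) e
  · have hi1 : b ^ 2 - a = 0 := hi
    have hj1 : a - b - a * b = 0 := hj
    have e : ((a) * (a ^ 2 + a + 1) : K) = 0 := by
      linear_combination (-(a ^ 2 + 2 * a + 1)) * hi1 + (-(-((-a - 1) * b + (-a)))) * hj1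
    exact (mul_ne_zero g0 g16) e
  · have hi1 : b ^ 2 - a = 0 := hi
    have hj1 : a * b - 2 * b + 1 = 0 := hj
    have e : ((a - 1) * (a ^ 2 - 3 * a + 1) : K) = 0 := by
      linear_combination (-(a ^ 2 - 4 * a + 4)) * hi1 + (-(-((a - 2) * b + (-1)))) * hj1
    exact (mul_ne_zero g1 g11) e
  · have hi1 : b ^ 2 - a = 0 := hi
    have hj1 : a * b - 2 * a + 1 = 0 := hj
    have e : ((a - 1) * (a ^ 2 - 3 * a + 1) : K) = 0 := by
      linear_combination (-(a ^ 2)) * hi1 + (-(-((a) * b + (2 * a - 1)))) * hj1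
    exact (mul_ne_zero g1 g11) e
  · have hi1 : a ^ 2 - b = 0 := hi
    have hj1 : a - b - a * b + a * b ^ 2 = 0 := hj
    have e : ((a) * (a - 1) * (a ^ 3 + a ^ 2 - 1) : K) = 0 := by
      linear_combination ((-((-a) * b + (-a ^ 3 + a + 1)))) * hi1 + ((1)) * hj1
    exact (mul_ne_zero (mul_ne_zero g0 g1) g20) e
  · have hi1 : a ^ 2 - b = 0 := hi
    have hj1 : b - a - a * b + a ^ 2 * b = 0 := hj
    have e : ((a) * (a - 1) * (a ^ 2 + 1) : K) = 0 := by
      linear_combination (-(-a ^ 2 + a - 1)) * hi1 + (-(-1)) * hj1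
    exact (mul_ne_zero (mul_ne_zero g0 g1) g15) e
  · have hi1 : a ^ 2 - b = 0 := hi
    have hj1 : a - a * b - b ^ 2 + a * b ^ 2 = 0 := hj
    have e : ((a) * (a - 1) * (a ^ 3 - a - 1) : K) = 0 := by
      linear_combination ((-((-a + 1) * b + (-a ^ 3 + a ^ 2 + a)))) * hi1 + ((1)) * hj1
    exact (mul_ne_zero (mul_ne_zero g0 g1) g19) e
  · have hi1 : a ^ 2 - b = 0 := hi
    have hj1 : b - a * b - a ^ 2 + a ^ 2 * b = 0 := hj
    have e : ((a) * (a) * (a) * (a - 1) : K) = 0 := by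
      linear_combination (-(-a ^ 2 + a - 1)) * hi1 + (-(-1)) * hj1
    exact (mul_ne_zero (mul_ne_zero (mul_ne_zero g0 g0) g0) g1) e
  · have hi1 : a ^ 2 - b = 0 := hi
    have hj1 : b - a - a * b = 0 := hj
    have e : ((a) * (a ^ 2 - a + 1) : K) = 0 := by
      linear_combination ((a - 1)) * hi1 + ((-1)) * hj1
    exact (mul_ne_zero g0 g14) e
  · have hi1 : a ^ 2 - b = 0 := hi
    have hj1 : a - b - a * b = 0 := hj
    have e : ((a) * (a ^ 2 + a - 1) : K) = 0 := by
      linear_combination ((a + 1)) * hi1 + ((-1)) * hj1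
    exact (mul_ne_zero g0 g10) e
  · have hi1 : a ^ 2 - b = 0 := hi
    have hj1 : a * b - 2 * b + 1 = 0 := hj
    have e : ((a - 1) * (a ^ 2 - a - 1) : K) = 0 := by
      linear_combination (-(-a + 2)) * hi1 + (-(-1)) * hj1
    exact (mul_ne_zero g1 g9) e
  · have hi1 : a ^ 2 - b = 0 := hi
    have hj1 : a * b - 2 * a + 1 = 0 := hj
    have e : ((a - 1) * (a ^ 2 + a - 1) : K) = 0 := by
      linear_combination (-(-a)) * hi1 + (-(-1)) * hj1
    exact (mul_ne_zero g1 g10) e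
  · have hi1 : a - b - a * b + a * b ^ 2 = 0 := hi
    have hj1 : b - a - a * b + a ^ 2 * b = 0 := hj
    have e : ((a) * (a) * (a - 1) * (a ^ 2 - 2 * a + 2) : K) = 0 := by
      linear_combination ((a ^ 4 - 2 * a ^ 3 + 3 * a ^ 2 - 2 * a + 1)) * hi1 + ((-((a ^ 3 - a ^ 2 + a) * b + (-a ^ 3 + a ^ 2 - 1)))) * hj1
    exact (mul_ne_zero (mul_ne_zero (mul_ne_zero g0 g0) g1) g17) e
  · have hi1 : a - b - a * b + a * b ^ 2 = 0 := hi
    have hj1 : a - a * b - b ^ 2 + a * b ^ 2 = 0 := hj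
    have e : ((a) * (a - 1) : K) = 0 := by
      linear_combination ((-(a ^ 2 - a) + (-a + 1) * b + (a))) * hi1 + (((a ^ 2) - (-a) * b - (a + 1))) * hj1
    exact (mul_ne_zero g0 g1) e
  · have hi1 : a - b - a * b + a * b ^ 2 = 0 := hi
    have hj1 : b - a * b - a ^ 2 + a ^ 2 * b = 0 := hj
    have e : ((a) * (a - 1) * (a ^ 3 - a ^ 2 + 2 * a - 1) : K) = 0 := by
      linear_combination ((a ^ 4 - 2 * a ^ 3 + 3 * a ^ 2 - 2 * a + 1)) * hi1 + ((-((a ^ 3 - a ^ 2 + a) * b + (-1)))) * hj1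
    exact (mul_ne_zero (mul_ne_zero g0 g1) g21) e
  · have hi1 : a - b - a * b + a * b ^ 2 = 0 := hi
    have hj1 : b - a - a * b = 0 := hj
    have e : ((a) * (a) * (3 * a - 2) : K) = 0 := by
      linear_combination ((a ^ 2 - 2 * a + 1)) * hi1 + ((-((-a ^ 2 + a) * b + (2 * a ^ 2 - 1)))) * hj1
    exact (mul_ne_zero (mul_ne_zero g0 g0) g5) e
  · have hi1 : a - b - a * b + a * b ^ 2 = 0 := hi
    have hj1 : a - b - a * b = 0 := hj
    have e : ((a) * (a) * (a) : K) = 0 := by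
      linear_combination ((a ^ 2 + 2 * a + 1)) * hi1 + ((-((-a ^ 2 - a) * b + (2 * a + 1)))) * hj1
    exact (mul_ne_zero (mul_ne_zero g0 g0) g0) e
  · have hi1 : a - b - a * b + a * b ^ 2 = 0 := hi
    have hj1 : a * b - 2 * b + 1 = 0 := hj
    have e : ((a - 1) * (a ^ 2 - 2 * a + 2) : K) = 0 := by
      linear_combination ((a ^ 2 - 4 * a + 4)) * hi1 + ((-((a ^ 2 - 2 * a) * b + (-a ^ 2 + 2)))) * hj1
    exact (mul_ne_zero g1 g17) e
  · have hi1 : a - b - a * b + a * b ^ 2 = 0 := hi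
    have hj1 : a * b - 2 * a + 1 = 0 := hj
    have e : ((a) * (a - 1) * (3 * a - 2) : K) = 0 := by
      linear_combination ((a ^ 2)) * hi1 + ((-((a ^ 2) * b + (a ^ 2 - 2 * a)))) * hj1
    exact (mul_ne_zero (mul_ne_zero g0 g1) g5) e
  · have hi1 : b - a - a * b + a ^ 2 * b = 0 := hi
    have hj1 : a - a * b - b ^ 2 + a * b ^ 2 = 0 := hj
    have e : ((a) * (a - 1) * (a ^ 3 - 2 * a ^ 2 + 3 * a - 1) : K) = 0 := by
      linear_combination ((-((a ^ 3 - 2 * a ^ 2 + 2 * a - 1) * b + (-a ^ 3 + 2 * a ^ 2 - 2 * a)))) * hi1 + ((a ^ 4 - 2 * a ^ 3 + 3 * a ^ 2 - 2 * a + 1)) * hj1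
    exact (mul_ne_zero (mul_ne_zero g0 g1) g22) e
  · have hi1 : b - a - a * b + a ^ 2 * b = 0 := hi
    have hj1 : b - a * b - a ^ 2 + a ^ 2 * b = 0 := hj
    have e : ((a) * (a - 1) * (a ^ 2 - a + 1) : K) = 0 := by
      linear_combination (-(-a ^ 2 + a - 1)) * hi1 + (-(a ^ 2 - a + 1)) * hj1
    exact (mul_ne_zero (mul_ne_zero g0 g1) g14) e
  · have hi1 : b - a - a * b + a ^ 2 * b = 0 := hi
    have hj1 : b - a - a * b = 0 := hj
    have e : ((a) * (a) * (a) : K) = 0 := by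
      linear_combination (-(a - 1)) * hi1 + (-(a ^ 2 - a + 1)) * hj1
    exact (mul_ne_zero (mul_ne_zero g0 g0) g0) e
  · have hi1 : b - a - a * b + a ^ 2 * b = 0 := hi
    have hj1 : a - b - a * b = 0 := hj
    have e : ((a) * (a) * (a - 2) : K) = 0 := by
      linear_combination ((a + 1)) * hi1 + ((a ^ 2 - a + 1)) * hj1
    exact (mul_ne_zero (mul_ne_zero g0 g0) g3) e
  · have hi1 : b - a - a * b + a ^ 2 * b = 0 := hi
    have hj1 : a * b - 2 * b + 1 = 0 := hj
    have e : ((a - 1) * (2 * a - 1) : K) = 0 := by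
      linear_combination ((-a + 2)) * hi1 + ((a ^ 2 - a + 1)) * hj1
    exact (mul_ne_zero g1 g4) e
  · have hi1 : b - a - a * b + a ^ 2 * b = 0 := hi
    have hj1 : a * b - 2 * a + 1 = 0 := hj
    have e : ((a - 1) * (2 * a ^ 2 - 2 * a + 1) : K) = 0 := by
      linear_combination (-(-a)) * hi1 + (-(a ^ 2 - a + 1)) * hj1
    exact (mul_ne_zero g1 g13) e
  · have hi1 : a - a * b - b ^ 2 + a * b ^ 2 = 0 := hi
    have hj1 : b - a * b - a ^ 2 + a ^ 2 * b = 0 := hj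
    have e : ((a) * (a - 1) * (a - 1) * (a ^ 2 + 1) : K) = 0 := by
      linear_combination ((a ^ 4 - 2 * a ^ 3 + 3 * a ^ 2 - 2 * a + 1)) * hi1 + ((-((a ^ 3 - 2 * a ^ 2 + 2 * a - 1) * b + (-a)))) * hj1
    exact (mul_ne_zero (mul_ne_zero (mul_ne_zero g0 g1) g1) g15) e
  · have hi1 : a - a * b - b ^ 2 + a * b ^ 2 = 0 := hi
    have hj1 : b - a - a * b = 0 := hj
    have e : ((a) * (a - 1) * (3 * a - 1) : K) = 0 := by
      linear_combination ((a ^ 2 - 2 * a + 1)) * hi1 + ((-((-a ^ 2 + 2 * a - 1) * b + (2 * a ^ 2 - 2 * a)))) * hj1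
    exact (mul_ne_zero (mul_ne_zero g0 g1) g6) e
  · have hi1 : a - a * b - b ^ 2 + a * b ^ 2 = 0 := hi
    have hj1 : a - b - a * b = 0 := hj
    have e : ((a) * (a ^ 2 + 1) : K) = 0 := by
      linear_combination ((a ^ 2 + 2 * a + 1)) * hi1 + ((-((-a ^ 2 + 1) * b + (2 * a)))) * hj1
    exact (mul_ne_zero g0 g15) e
  · have hi1 : a - a * b - b ^ 2 + a * b ^ 2 = 0 := hi
    have hj1 : a * b - 2 * b + 1 = 0 := hj
    have e : ((a - 1) * (a - 1) * (a - 1) : K) = 0 := by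
      linear_combination ((a ^ 2 - 4 * a + 4)) * hi1 + ((-((a ^ 2 - 3 * a + 2) * b + (-a ^ 2 + a + 1)))) * hj1
    exact (mul_ne_zero (mul_ne_zero g1 g1) g1) e
  · have hi1 : a - a * b - b ^ 2 + a * b ^ 2 = 0 := hi
    have hj1 : a * b - 2 * a + 1 = 0 := hj
    have e : ((a - 1) * (a - 1) * (3 * a - 1) : K) = 0 := by
      linear_combination ((a ^ 2)) * hi1 + ((-((a ^ 2 - a) * b + (a ^ 2 - 3 * a + 1)))) * hj1
    exact (mul_ne_zero (mul_ne_zero g1 g1) g6) e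
  · have hi1 : b - a * b - a ^ 2 + a ^ 2 * b = 0 := hi
    have hj1 : b - a - a * b = 0 := hj
    have e : ((a) * (2 * a ^ 2 - 2 * a + 1) : K) = 0 := by
      linear_combination (-(a - 1)) * hi1 + (-(a ^ 2 - a + 1)) * hj1
    exact (mul_ne_zero g0 g13) e
  · have hi1 : b - a * b - a ^ 2 + a ^ 2 * b = 0 := hi
    have hj1 : a - b - a * b = 0 := hj
    have e : ((a) * (2 * a - 1) : K) = 0 := by
      linear_combination (-(a + 1)) * hi1 + (-(a ^ 2 - a + 1)) * hj1
    exact (mul_ne_zero g0 g4) e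
  · have hi1 : b - a * b - a ^ 2 + a ^ 2 * b = 0 := hi
    have hj1 : a * b - 2 * b + 1 = 0 := hj
    have e : ((a - 1) * (a - 1) * (a + 1) : K) = 0 := by
      linear_combination ((-a + 2)) * hi1 + ((a ^ 2 - a + 1)) * hj1
    exact (mul_ne_zero (mul_ne_zero g1 g1) g2) e
  · have hi1 : b - a * b - a ^ 2 + a ^ 2 * b = 0 := hi
    have hj1 : a * b - 2 * a + 1 = 0 := hj
    have e : ((a - 1) * (a - 1) * (a - 1) : K) = 0 := by
      linear_combination (-(-a)) * hi1 + (-(a ^ 2 - a + 1)) * hj1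
    exact (mul_ne_zero (mul_ne_zero g1 g1) g1) e
  · have hi1 : b - a - a * b = 0 := hi
    have hj1 : a - b - a * b = 0 := hj
    have e : (2 * (a) * (a) : K) = 0 := by
      linear_combination (-(a + 1)) * hi1 + (-(-a + 1)) * hj1
    exact (mul_ne_zero (mul_ne_zero h2 g0) g0) e
  · have hi1 : b - a - a * b = 0 := hi
    have hj1 : a * b - 2 * b + 1 = 0 := hj
    have e : ((a ^ 2 - 3 * a + 1) : K) = 0 := by
      linear_combination ((-a + 2)) * hi1 + ((-a + 1)) * hj1
    exact g11 e
  · have hi1 : b - a - a * b = 0 := hi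
    have hj1 : a * b - 2 * a + 1 = 0 := hj
    have e : ((3 * a ^ 2 - 3 * a + 1) : K) = 0 := by
      linear_combination ((-a)) * hi1 + ((-a + 1)) * hj1
    exact g12 e
  · have hi1 : a - b - a * b = 0 := hi
    have hj1 : a * b - 2 * b + 1 = 0 := hj
    have e : ((a ^ 2 - a + 1) : K) = 0 := by
      linear_combination (-(-a + 2)) * hi1 + (-(-a - 1)) * hj1
    exact g14 e
  · have hi1 : a - b - a * b = 0 := hi
    have hj1 : a * b - 2 * a + 1 = 0 := hj
    have e : ((a ^ 2 + a - 1) : K) = 0 := by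
      linear_combination ((-a)) * hi1 + ((-a - 1)) * hj1
    exact g10 e
  · have hi1 : a * b - 2 * b + 1 = 0 := hi
    have hj1 : a * b - 2 * a + 1 = 0 := hj
    have e : (2 * (a - 1) * (a - 1) : K) = 0 := by
      linear_combination (-(-a)) * hi1 + (-(a - 2)) * hj1
    exact (mul_ne_zero (mul_ne_zero h2 g1) g1) e

lemma ev_coprime {a b : K} (h2 : (2 : K) ≠ 0) (hg : gd a ≠ 0) (i j : Fin 14) (hij : i ≠ j)
    (hi : ev a b i = 0) : ev a b j ≠ 0 := by
  intro hj
  rcases lt_or_gt_of_ne hij with h | h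
  · exact ev_coprime_lt h2 hg i j h hi hj
  · exact ev_coprime_lt h2 hg j i h hj hi

lemma ev_simple {a b : K} (h2 : (2 : K) ≠ 0) (hg : gd a ≠ 0) (i : Fin 14)
    (hi : ev a b i = 0) : dv a b i ≠ 0 := by
  intro hd
  obtain ⟨g0, g1, g2, g3, g4, g5, g6, g7, g8, g9, g10, g11, g12, g13, g14, g15, g16, g17, g18, g19, g20, g21, g22, g23, g24, g25, g26, g27⟩ := gd_factors hg
  fin_cases i
  · have hd1 : (1 : K) = 0 := hd
    have e : (1 : K) = 0 := by
      linear_combination (1) * hd1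
    exact one_ne_zero e
  · have hd1 : (-1 : K) = 0 := hd
    have e : (1 : K) = 0 := by
      linear_combination (-1) * hd1
    exact one_ne_zero e
  · have hd1 : (1 : K) = 0 := hd
    have e : (1 : K) = 0 := by
      linear_combination (1) * hd1
    exact one_ne_zero e
  · have hd1 : (2 * (1) * b + (-2) : K) = 0 := hd
    have hi1 : b ^ 2 - 2 * b + a = 0 := hi
    have e : (2 * 2 * (a - 1) : K) = 0 := by
      linear_combination (-(2 * (1) * b + (-2))) * hd1 - (-4 * (1)) * hi1
    exact (mul_ne_zero (mul_ne_zero h2 h2) g1) e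
  · have hd1 : (2 * (1) * b + (0) : K) = 0 := hd
    have hi1 : b ^ 2 - a = 0 := hi
    have e : (2 * 2 * (a) : K) = 0 := by
      linear_combination ((2 * (1) * b + (0))) * hd1 - (4 * (1)) * hi1
    exact (mul_ne_zero (mul_ne_zero h2 h2) g0) e
  · have hd1 : (-1 : K) = 0 := hd
    have e : (1 : K) = 0 := by
      linear_combination (-1) * hd1
    exact one_ne_zero e
  · have hd1 : (2 * (a) * b + (-a - 1) : K) = 0 := hd
    have hi1 : a - b - a * b + a * b ^ 2 = 0 := hi
    have e : ((a - 1) * (3 * a + 1) : K) = 0 := by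
      linear_combination (-(2 * (a) * b + (-a - 1))) * hd1 - (-4 * (a)) * hi1
    exact (mul_ne_zero g1 g7) e
  · have hd1 : (a ^ 2 - a + 1 : K) = 0 := hd
    have e : ((a ^ 2 - a + 1) : K) = 0 := by
      linear_combination (1) * hd1
    exact g14 e
  · have hd1 : (2 * (a - 1) * b + (-a) : K) = 0 := hd
    have hi1 : a - a * b - b ^ 2 + a * b ^ 2 = 0 := hi
    have e : ((a) * (3 * a - 4) : K) = 0 := by
      linear_combination (-(2 * (a - 1) * b + (-a))) * hd1 - (-4 * (a - 1)) * hi1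
    exact (mul_ne_zero g0 g8) e
  · have hd1 : (a ^ 2 - a + 1 : K) = 0 := hd
    have e : ((a ^ 2 - a + 1) : K) = 0 := by
      linear_combination (1) * hd1
    exact g14 e
  · have hd1 : (-a + 1 : K) = 0 := hd
    have e : ((a - 1) : K) = 0 := by
      linear_combination (-1) * hd1
    exact g1 e
  · have hd1 : (-a - 1 : K) = 0 := hd
    have e : ((a + 1) : K) = 0 := by
      linear_combination (-1) * hd1
    exact g2 e
  · have hd1 : (a - 2 : K) = 0 := hd
    have e : ((a - 2) : K) = 0 := by
      linear_combination (1) * hd1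
    exact g3 e
  · have hd1 : (a : K) = 0 := hd
    have e : ((a) : K) = 0 := by
      linear_combination (1) * hd1
    exact g0 e

lemma lin_root (m n : K) (hm : m ≠ 0) : ∃ b : K, m * b + n = 0 :=
  ⟨-n / m, by field_simp; ring⟩

lemma quad_root [IsAlgClosed K] (p₂ p₁ p₀ : K) (hp : p₂ ≠ 0) :
    ∃ b : K, p₂ * b ^ 2 + p₁ * b + p₀ = 0 := by
  have hd := Polynomial.degree_quadratic (b := p₁) (c := p₀) hp
  obtain ⟨b, hb⟩ := IsAlgClosed.exists_root (Polynomial.C p₂ * Polynomial.X ^ 2 +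
    Polynomial.C p₁ * Polynomial.X + Polynomial.C p₀) (by rw [hd]; decide)
  exact ⟨b, by simpa [Polynomial.IsRoot] using hb⟩

lemma ev_root [IsAlgClosed K] {a : K} (hg : gd a ≠ 0) (i : Fin 14) :
    ∃ b : K, ev a b i = 0 := by
  obtain ⟨g0, g1, g2, g3, g4, g5, g6, g7, g8, g9, g10, g11, g12, g13, g14, g15, g16, g17, g18, g19, g20, g21, g22, g23, g24, g25, g26, g27⟩ := gd_factors hg
  fin_cases i
  · obtain ⟨b, h⟩ := lin_root (K := K) (1) (0) one_ne_zero
    exact ⟨b, show b = 0 by linear_combination (1) * h⟩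
  · obtain ⟨b, h⟩ := lin_root (K := K) (1) (-1) one_ne_zero
    exact ⟨b, show 1 - b = 0 by linear_combination (-1) * h⟩
  · obtain ⟨b, h⟩ := lin_root (K := K) (1) (a ^ 2 - 2 * a) one_ne_zero
    exact ⟨b, show a ^ 2 - 2 * a + b = 0 by linear_combination (1) * h⟩
  · obtain ⟨b, h⟩ := quad_root (K := K) (1) (-2) (a) one_ne_zero
    exact ⟨b, show b ^ 2 - 2 * b + a = 0 by linear_combination (1) * h⟩
  · obtain ⟨b, h⟩ := quad_root (K := K) (1) (0) (-a) one_ne_zero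
    exact ⟨b, show b ^ 2 - a = 0 by linear_combination (1) * h⟩
  · obtain ⟨b, h⟩ := lin_root (K := K) (1) (-a ^ 2) one_ne_zero
    exact ⟨b, show a ^ 2 - b = 0 by linear_combination (-1) * h⟩
  · obtain ⟨b, h⟩ := quad_root (K := K) (a) (-a - 1) (a) g0
    exact ⟨b, show a - b - a * b + a * b ^ 2 = 0 by linear_combination (1) * h⟩
  · obtain ⟨b, h⟩ := lin_root (K := K) (a ^ 2 - a + 1) (-a) g14
    exact ⟨b, show b - a - a * b + a ^ 2 * b = 0 by linear_combination (1) * h⟩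
  · obtain ⟨b, h⟩ := quad_root (K := K) (a - 1) (-a) (a) g1
    exact ⟨b, show a - a * b - b ^ 2 + a * b ^ 2 = 0 by linear_combination (1) * h⟩
  · obtain ⟨b, h⟩ := lin_root (K := K) (a ^ 2 - a + 1) (-a ^ 2) g14
    exact ⟨b, show b - a * b - a ^ 2 + a ^ 2 * b = 0 by linear_combination (1) * h⟩
  · obtain ⟨b, h⟩ := lin_root (K := K) (a - 1) (a) g1
    exact ⟨b, show b - a - a * b = 0 by linear_combination (-1) * h⟩
  · obtain ⟨b, h⟩ := lin_root (K := K) (a + 1) (-a) g2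
    exact ⟨b, show a - b - a * b = 0 by linear_combination (-1) * h⟩
  · obtain ⟨b, h⟩ := lin_root (K := K) (a - 2) (1) g3
    exact ⟨b, show a * b - 2 * b + 1 = 0 by linear_combination (1) * h⟩
  · obtain ⟨b, h⟩ := lin_root (K := K) (a) (-2 * a + 1) g0
    exact ⟨b, show a * b - 2 * a + 1 = 0 by linear_combination (1) * h⟩

end field

section poly
open Polynomial
variable {F : Type*} [Field F]

lemma ne_zero_of_eval (p : F[X]) (c : F) (h : p.eval c ≠ 0) : p ≠ 0 := by
  rintro rfl; simp at h

lemma gd_X_ne_zero (h2 : (2 : F) ≠ 0) : gd (X : F[X]) ≠ 0 := by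
  have h4 : (4 : F) ≠ 0 := by
    have : (4 : F) = 2 * 2 := by norm_num
    rw [this]; exact mul_ne_zero h2 h2
  unfold gd
  refine mul_ne_zero (mul_ne_zero (mul_ne_zero (mul_ne_zero (mul_ne_zero (mul_ne_zero (mul_ne_zero (mul_ne_zero (mul_ne_zero (mul_ne_zero (mul_ne_zero (mul_ne_zero (mul_ne_zero (mul_ne_zero (mul_ne_zero (mul_ne_zero (mul_ne_zero (mul_ne_zero (mul_ne_zero (mul_ne_zero (mul_ne_zero (mul_ne_zero (mul_ne_zero (mul_ne_zero (mul_ne_zero (mul_ne_zero (mul_ne_zero ?_ ?_) ?_) ?_) ?_) ?_) ?_) ?_) ?_) ?_) ?_) ?_) ?_) ?_) ?_) ?_) ?_) ?_) ?_) ?_) ?_) ?_) ?_) ?_) ?_) ?_) ?_) ?_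
  · exact ne_zero_of_eval _ 1 (by simp only [eval_add, eval_sub, eval_mul, eval_pow, eval_X, eval_ofNat, eval_one]; norm_num)
  · exact ne_zero_of_eval _ 0 (by simp [h2, h4])
  · exact ne_zero_of_eval _ 0 (by simp [h2, h4])
  · exact ne_zero_of_eval _ 0 (by simp [h2, h4])
  · exact ne_zero_of_eval _ 0 (by simp [h2, h4])
  · exact ne_zero_of_eval _ 0 (by simp [h2, h4])
  · exact ne_zero_of_eval _ 0 (by simp [h2, h4])
  · exact ne_zero_of_eval _ 0 (by simp [h2, h4])
  · exact ne_zero_of_eval _ 0 (by simp [h2, h4])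
  · exact ne_zero_of_eval _ 0 (by simp [h2, h4])
  · exact ne_zero_of_eval _ 0 (by simp [h2, h4])
  · exact ne_zero_of_eval _ 0 (by simp [h2, h4])
  · exact ne_zero_of_eval _ 0 (by simp [h2, h4])
  · exact ne_zero_of_eval _ 0 (by simp [h2, h4])
  · exact ne_zero_of_eval _ 0 (by simp [h2, h4])
  · exact ne_zero_of_eval _ 0 (by simp [h2, h4])
  · exact ne_zero_of_eval _ 0 (by simp [h2, h4])
  · exact ne_zero_of_eval _ 0 (by simp [h2, h4])
  · exact ne_zero_of_eval _ 1 (by simp only [eval_add, eval_sub, eval_mul, eval_pow, eval_X, eval_ofNat, eval_one]; norm_num)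
  · exact ne_zero_of_eval _ 0 (by simp [h2, h4])
  · exact ne_zero_of_eval _ 0 (by simp [h2, h4])
  · exact ne_zero_of_eval _ 0 (by simp [h2, h4])
  · exact ne_zero_of_eval _ 0 (by simp [h2, h4])
  · exact ne_zero_of_eval _ 0 (by simp [h2, h4])
  · exact ne_zero_of_eval _ 0 (by simp [h2, h4])
  · exact ne_zero_of_eval _ 0 (by simp [h2, h4])
  · exact ne_zero_of_eval _ 0 (by simp [h2, h4])
  · exact ne_zero_of_eval _ 0 (by simp [h2, h4])

lemma gd_X_natDegree : (gd (X : F[X])).natDegree ≤ 80 := by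
  unfold gd
  compute_degree
  norm_num

end poly

section bound
open Polynomial

lemma hns_of_simple {F K : Type*} [Field F] [Field K] (φ : F →+* K) (f : F[X]) (β : K)
    (h0 : (f.map φ).eval β = 0) (h1 : (derivative (f.map φ)).eval β ≠ 0) :
    ∀ (r s : F[X]) (v : F), v ≠ 0 → f * r ^ 2 = C v * s ^ 2 → r = 0 := by
  intro r s v hv h
  by_contra hr
  have hf' : f.map φ ≠ 0 := by
    intro h; rw [h] at h1; simp at h1
  have hf : f ≠ 0 := by
    intro h; rw [h] at hf'; simp at hf'
  have hs : s ≠ 0 := by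
    rintro rfl
    simp [hf, hr] at h
  have hr' : r.map φ ≠ 0 := (Polynomial.map_ne_zero_iff φ.injective).2 hr
  have hs' : s.map φ ≠ 0 := (Polynomial.map_ne_zero_iff φ.injective).2 hs
  have h' := congrArg (Polynomial.map φ) h
  rw [Polynomial.map_mul, Polynomial.map_mul, Polynomial.map_pow, Polynomial.map_pow, map_C] at h'
  have hm : rootMultiplicity β (f.map φ) = 1 := by
    have ha : 0 < rootMultiplicity β (f.map φ) := (rootMultiplicity_pos hf').2 h0
    have hb : ¬ 1 < rootMultiplicity β (f.map φ) := by
      rw [one_lt_rootMultiplicity_iff_isRoot hf']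
      rintro ⟨-, h⟩
      exact h1 h
    omega
  have hvv : φ v ≠ 0 := by simpa using hv
  have hC : (C (φ v) : K[X]) ≠ 0 := by simpa using hv
  have hmul := congrArg (rootMultiplicity β) h'
  rw [rootMultiplicity_mul (mul_ne_zero hf' (pow_ne_zero 2 hr')),
    rootMultiplicity_mul (mul_ne_zero hC (pow_ne_zero 2 hs')), rootMultiplicity_C, hm,
    sq, sq, rootMultiplicity_mul (mul_ne_zero hr' hr'),
    rootMultiplicity_mul (mul_ne_zero hs' hs')] at hmul
  omega

lemma map_ev {R S : Type*} [CommRing R] [CommRing S] (φ : R →+* S) (a b : R) (i : Fin 14) :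
    φ (ev a b i) = ev (φ a) (φ b) i := by
  fin_cases i <;> simp [ev, map_ofNat φ]

lemma map_gd {R S : Type*} [CommRing R] [CommRing S] (φ : R →+* S) (a : R) :
    φ (gd a) = gd (φ a) := by
  simp [gd, map_ofNat φ]

variable {F : Type*} [Field F]

/-- degrees in the second variable -/
def dg : Fin 14 → ℕ := ![1, 1, 1, 2, 2, 1, 2, 1, 2, 1, 1, 1, 1, 1]

lemma ev_natDegree (a : F) (i : Fin 14) : (ev (C a) X i).natDegree ≤ dg i := by
  fin_cases i
  · show (X : F[X]).natDegree ≤ 1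
    compute_degree
  · show (1 - X : F[X]).natDegree ≤ 1
    compute_degree
  · show ((C a) ^ 2 - 2 * (C a) + X : F[X]).natDegree ≤ 1
    compute_degree
  · show (X ^ 2 - 2 * X + C a : F[X]).natDegree ≤ 2
    compute_degree
  · show (X ^ 2 - C a : F[X]).natDegree ≤ 2
    compute_degree
  · show ((C a) ^ 2 - X : F[X]).natDegree ≤ 1
    compute_degree
  · show (C a - X - C a * X + C a * X ^ 2 : F[X]).natDegree ≤ 2
    compute_degree
  · show (X - C a - C a * X + (C a) ^ 2 * X : F[X]).natDegree ≤ 1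
    compute_degree
  · show (C a - C a * X - X ^ 2 + C a * X ^ 2 : F[X]).natDegree ≤ 2
    compute_degree
  · show (X - C a * X - (C a) ^ 2 + (C a) ^ 2 * X : F[X]).natDegree ≤ 1
    compute_degree
  · show (X - C a - C a * X : F[X]).natDegree ≤ 1
    compute_degree
  · show (C a - X - C a * X : F[X]).natDegree ≤ 1
    compute_degree
  · show (C a * X - 2 * X + 1 : F[X]).natDegree ≤ 1
    compute_degree
  · show (C a * X - 2 * C a + 1 : F[X]).natDegree ≤ 1
    compute_degree

lemma ev_derivative (a b : F) (i : Fin 14) :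
    (derivative (ev (C a) X i)).eval b = dv a b i := by
  fin_cases i <;> simp [ev, dv, derivative_pow] <;> ring

lemma prod_natDegree (a : F) (T : Finset (Fin 14)) :
    (∏ i ∈ T, ev (C a) X i).natDegree ≤ 18 := by
  refine (natDegree_prod_le _ _).trans ?_
  refine (Finset.sum_le_sum fun i _ => ev_natDegree a i).trans ?_
  refine (Finset.sum_le_sum_of_subset (Finset.subset_univ T)).trans ?_
  decide

lemma eval_ev (a b : F) (i : Fin 14) : (ev (C a) X i).eval b = ev a b i := by
  have := map_ev (evalRingHom b) (C a) X i
  simpa using this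

lemma ev_ne_zero (h2 : (2 : F) ≠ 0) (a : F) (hg : gd a ≠ 0) (i : Fin 14) :
    ev (C a) (X : F[X]) i ≠ 0 := by
  intro h
  have hd := ev_derivative a 0 i
  have he := eval_ev a 0 i
  rw [h] at hd he
  exact ev_simple h2 hg i (by simpa using he.symm) (by simpa using hd.symm)

lemma prod_hns (h2 : (2 : F) ≠ 0) (a : F) (hg : gd a ≠ 0) (T : Finset (Fin 14))
    (hT : T.Nonempty) :
    ∀ (r s : F[X]) (v : F), v ≠ 0 → (∏ i ∈ T, ev (C a) X i) * r ^ 2 = C v * s ^ 2 → r = 0 := by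
  obtain ⟨i, hi⟩ := hT
  let φ : F →+* AlgebraicClosure F := algebraMap F (AlgebraicClosure F)
  have hg' : gd (φ a) ≠ 0 := by
    rw [← map_gd]; simpa using hg
  have h2' : (2 : AlgebraicClosure F) ≠ 0 := by
    have : φ 2 ≠ 0 := by simpa using h2
    rwa [map_ofNat φ] at this
  obtain ⟨β, hβ⟩ := ev_root hg' i
  have hmap : (∏ i ∈ T, ev (C a) X i).map φ = ∏ i ∈ T, ev (C (φ a)) X i := by
    rw [Polynomial.map_prod]
    refine Finset.prod_congr rfl fun j _ => ?_
    have := map_ev (mapRingHom φ) (C a) X j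
    simpa using this
  refine hns_of_simple φ _ β ?_ ?_
  · rw [hmap, eval_prod]
    exact Finset.prod_eq_zero hi (by rw [eval_ev, hβ])
  · rw [hmap, ← Finset.mul_prod_erase _ _ hi, derivative_mul, eval_add, eval_mul, eval_mul,
      eval_ev, hβ, zero_mul, add_zero, ev_derivative, eval_prod]
    refine mul_ne_zero (ev_simple h2' hg' i hβ) (Finset.prod_ne_zero_iff.2 fun j hj => ?_)
    rw [eval_ev]
    exact ev_coprime h2' hg' i j (Finset.ne_of_mem_erase hj).symm hβ

/-- the character attached to the polynomials, real valued -/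
def ch [Fintype F] (x : F) : ℝ := ((quadraticChar F x : ℤ) : ℝ)

lemma ch_prod [Fintype F] {ι : Type*} (T : Finset ι) (g : ι → F) :
    ch (∏ i ∈ T, g i) = ∏ i ∈ T, ch (g i) := by
  simp [ch, map_prod]

theorem inner_bound [Fintype F] (hodd : Fintype.card F % 2 = 1) (hq : 2518 ^ 2 ≤ Fintype.card F)
    (h2 : (2 : F) ≠ 0) (a : F) (hg : gd a ≠ 0) (T : Finset (Fin 14)) (hT : T.Nonempty) :
    |∑ b : F, ∏ i ∈ T, ch (ev a b i)| ≤ 61 * √(Fintype.card F : ℝ) := by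
  have h := Stepanov.char_sum_bound (∏ i ∈ T, ev (C a) X i) (prod_natDegree a T)
    (Finset.prod_ne_zero_iff.2 fun i _ => ev_ne_zero h2 a hg i) (prod_hns h2 a hg T hT) hodd hq
  refine le_of_eq_of_le (congrArg _ (Finset.sum_congr rfl fun b _ => ?_)) h
  rw [← ch_prod, eval_prod, Finset.prod_congr rfl fun i _ => eval_ev a b i, ch]

/-- sums of characters of products of `X` and `1 - X` -/
theorem outer_bound [Fintype F] (hodd : Fintype.card F % 2 = 1)
    (hq : 2518 ^ 2 ≤ Fintype.card F)
    (T : Finset (Fin 2)) (hT : T.Nonempty) :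
    |∑ b : F, ∏ i ∈ T, ch ((![b, 1 - b] : Fin 2 → F) i)| ≤ 61 * √(Fintype.card F : ℝ) := by
  have he : ∀ (b : F) (i : Fin 2), ((![X, 1 - X] : Fin 2 → F[X]) i).eval b =
      (![b, 1 - b] : Fin 2 → F) i := by
    intro b i; fin_cases i <;> simp
  have hd : (∏ i ∈ T, (![X, 1 - X] : Fin 2 → F[X]) i).natDegree ≤ 18 := by
    refine (natDegree_prod_le _ _).trans ?_
    have : ∀ i ∈ T, ((![X, 1 - X] : Fin 2 → F[X]) i).natDegree ≤ 1 := by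
      intro i _
      fin_cases i
      · show (X : F[X]).natDegree ≤ 1
        compute_degree
      · show (1 - X : F[X]).natDegree ≤ 1
        compute_degree
    refine (Finset.sum_le_card_nsmul _ _ _ this).trans ?_
    have := T.card_le_univ
    simp at this ⊢
    omega
  obtain ⟨i, hi⟩ := hT
  have hs : ∃ β : F, (∏ i ∈ T, (![X, 1 - X] : Fin 2 → F[X]) i).eval β = 0 ∧
      (derivative (∏ i ∈ T, (![X, 1 - X] : Fin 2 → F[X]) i)).eval β ≠ 0 := by
    refine ⟨(![0, 1] : Fin 2 → F) i, ?_, ?_⟩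
    · rw [eval_prod]
      exact Finset.prod_eq_zero hi (by rw [he]; fin_cases i <;> simp)
    · rw [← Finset.mul_prod_erase _ _ hi, derivative_mul, eval_add, eval_mul, eval_mul, he,
        eval_prod]
      have h0 : (![(![0, 1] : Fin 2 → F) i, 1 - (![0, 1] : Fin 2 → F) i] : Fin 2 → F) i = 0 := by
        fin_cases i <;> simp
      rw [h0, zero_mul, add_zero]
      refine mul_ne_zero ?_ (Finset.prod_ne_zero_iff.2 fun j hj => ?_)
      · fin_cases i <;> simp
      · rw [he]
        have := Finset.ne_of_mem_erase hj
        fin_cases i <;> fin_cases j <;> simp at this ⊢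
  obtain ⟨β, hb0, hb1⟩ := hs
  have h := Stepanov.char_sum_bound (∏ i ∈ T, (![X, 1 - X] : Fin 2 → F[X]) i) hd
    (by intro h; rw [h] at hb1; simp at hb1)
    (hns_of_simple (RingHom.id F) _ β (by simpa using hb0) (by simpa using hb1)) hodd hq
  refine le_of_eq_of_le (congrArg _ (Finset.sum_congr rfl fun b _ => ?_)) h
  rw [← ch_prod, eval_prod, Finset.prod_congr rfl fun i _ => he b i, ch]

/-- for good `a`, few `b` are exceptional -/
lemma card_zero_le [Fintype F] (h2 : (2 : F) ≠ 0) (a : F) (hg : gd a ≠ 0) :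
    (Finset.univ.filter fun b : F => ∃ i, ev a b i = 0).card ≤ 18 := by
  have hne : (∏ i, ev (C a) (X : F[X]) i) ≠ 0 :=
    Finset.prod_ne_zero_iff.2 fun i _ => ev_ne_zero h2 a hg i
  refine (Polynomial.card_le_degree_of_subset_roots (p := ∏ i, ev (C a) (X : F[X]) i) ?_).trans
    (prod_natDegree a _)
  intro b hb
  simp only [Finset.mem_val, Finset.mem_filter, Finset.mem_univ, true_and] at hb
  obtain ⟨i, hi⟩ := hb
  rw [mem_roots hne, IsRoot, eval_prod]
  exact Finset.prod_eq_zero (Finset.mem_univ i) (by rw [eval_ev, hi])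

lemma card_bad_le [Fintype F] (h2 : (2 : F) ≠ 0) :
    (Finset.univ.filter fun a : F => gd a = 0).card ≤ 80 := by
  refine (Polynomial.card_le_degree_of_subset_roots (p := gd (X : F[X])) ?_).trans
    gd_X_natDegree
  intro a ha
  simp only [Finset.mem_val, Finset.mem_filter, Finset.mem_univ, true_and] at ha
  rw [mem_roots (gd_X_ne_zero h2), IsRoot]
  have := map_gd (evalRingHom a) (X : F[X])
  simpa [ha] using this

end bound

end Polys

namespace Equivalence

/-- Boolean square test -/
def sq {F : Type*} [Field F] (z : F) : Bool := decide (IsSquare z)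

/-- the forbidden sign patterns in one orientation -/
def bd (α β f1 f2 f3 f3s f4 f5 f6 : Bool) : Bool :=
  ((f3 != (α == β)) && (f4 != (α == β))) ||
  (!β && (f1 == (α == β)) && (f3s == (α == β))) ||
  ((f1 != f2) && ((f2 == f5) == β) && ((f2 == f6) != α)) ||
  (!α && (f2 == (α == β)) && (f2 == f4))

/-- the Boolean criterion for maximal nonassociativity -/
def crit (α β : Bool) (e : Fin 14 → Bool) : Bool :=
  (α == e 0) && (β == e 1) && !(α && β) &&
  !(bd α β (e 2) (e 4) (e 6) (e 7) (e 8) (e 10) (e 12)) &&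
  !(bd α β (e 3) (e 5) (e 7) (e 6) (e 9) (e 11) (e 13))

section
variable {F : Type*} [Field F]

/-- coefficient of `u` in the associativity equation -/
def cA (ci cr cs : F) : F := cs - ci - cr + ci * cr
/-- coefficient of `w` in the associativity equation -/
def cB (cj cr cs : F) : F := cs * cj - cr
/-- value governing the third class -/
def cC (ci cj cr cs : F) : F := cA ci cr cs - (1 - ci) * cB cj cr cs
/-- value governing the fourth class -/
def cE (ci cj cr cs : F) : F := cj * cA ci cr cs - cB cj cr cs

/-- solvability condition for a class pattern -/
def Bad (ci cj cr cs : F) (ij ir is : Bool) : Prop :=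
  (sq (cA ci cr cs) == sq (cB cj cr cs)) = ij ∧
  (sq (cB cj cr cs) == sq (cC ci cj cr cs)) = ir ∧
  (sq (cB cj cr cs) == sq (cE ci cj cr cs)) = is

/-- genericity -/
def NZ (ci cj cr cs : F) : Prop :=
  cA ci cr cs ≠ 0 ∧ cB cj cr cs ≠ 0 ∧ cC ci cj cr cs ≠ 0 ∧ cE ci cj cr cs ≠ 0

/-- the two multipliers indexed by classes -/
def cc (a b : F) (t : Bool) : F := if t then a else b

lemma qop_eq (a b u v : F) : qop a b u v = u + cc a b (sq (v - u)) * (v - u) := by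
  unfold qop cc sq
  by_cases h : IsSquare (v - u) <;> simp [h]

lemma qop_shift (a b u v t : F) : qop a b (u + t) (v + t) = qop a b u v + t := by
  unfold qop
  have : v + t - (u + t) = v - u := by ring
  rw [this]
  split_ifs <;> ring

lemma maxNA_iff (a b : F) : MaxNA a b ↔
    ∀ u w : F, qop a b (qop a b u 0) w = qop a b u (qop a b 0 w) → u = 0 ∧ w = 0 := by
  constructor
  · intro h u w e
    obtain ⟨h1, h2⟩ := h u 0 w e
    exact ⟨h1, h2.symm⟩
  · intro h u v w e
    have := h (u - v) (w - v) (by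
      apply add_right_cancel (b := v)
      rw [← qop_shift, ← qop_shift, ← qop_shift, ← qop_shift]
      simpa using e)
    exact ⟨sub_eq_zero.1 this.1, (sub_eq_zero.1 this.2).symm⟩

end

section
variable {F : Type*} [Field F] [Fintype F]

lemma sq_neg (h1 : Fintype.card F % 4 = 1) (x : F) : sq (-x) = sq x := by
  have hm : IsSquare (-1 : F) := by
    rw [FiniteField.isSquare_neg_one_iff]; omega
  unfold sq
  congr 1
  apply propext
  constructor
  · intro h
    have := hm.mul h
    simpa using this
  · intro h
    have := hm.mul h
    simpa using this

lemma sq_mul (x y : F) (hx : x ≠ 0) (hy : y ≠ 0) : sq (x * y) = (sq x == sq y) := by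
  have h := map_mul (quadraticChar F) x y
  have key : ∀ z : F, z ≠ 0 → quadraticChar F z = if sq z then 1 else -1 := by
    intro z hz
    unfold sq
    by_cases hs : IsSquare z
    · simp [hs, (quadraticChar_one_iff_isSquare hz).2 hs]
    · simp [hs, quadraticChar_neg_one_iff_not_isSquare.2 hs]
  rw [key x hx, key y hy, key _ (mul_ne_zero hx hy)] at h
  cases hxs : sq x <;> cases hys : sq y <;> cases hxy : sq (x * y) <;>
    simp [hxs, hys, hxy] at h ⊢

lemma sq_zero : sq (0 : F) = true := by simp [sq]
lemma sq_one : sq (1 : F) = true := by simp [sq]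

lemma exists_sq (h1 : Fintype.card F % 4 = 1) (t : Bool) : ∃ k : F, k ≠ 0 ∧ sq k = t := by
  cases t
  · have hc : ringChar F ≠ 2 := by
      intro h
      have := FiniteField.even_card_of_char_two h
      omega
    obtain ⟨k, hk⟩ := FiniteField.exists_nonsquare hc
    refine ⟨k, ?_, by simpa [sq] using hk⟩
    rintro rfl
    exact hk (by simp)
  · exact ⟨1, one_ne_zero, sq_one⟩

lemma boolA : ∀ i j x y : Bool, (j == y) = (i == x) → (x == y) = (i == j) := by decide

lemma boolB : ∀ i j x y : Bool, (j == y) = (i == x) → (y == x) = (i == j) := by decide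

lemma maxNA_iff_bad (h1 : Fintype.card F % 4 = 1) (a b : F)
    (ha0 : a ≠ 0) (ha1 : a ≠ 1) (hb0 : b ≠ 0) (hb1 : b ≠ 1)
    (hnz : ∀ i j r s, NZ (cc a b i) (cc a b j) (cc a b r) (cc a b s)) :
    MaxNA a b ↔ ∀ i j r s, ¬ Bad (cc a b i) (cc a b j) (cc a b r) (cc a b s)
      (i == j) (i == r) (i == s) := by
  have hc0 : ∀ t, cc a b t ≠ 0 := by intro t; cases t <;> simp [cc, ha0, hb0]
  have hc1 : ∀ t, cc a b t - 1 ≠ 0 := by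
    intro t; cases t <;> simp [cc, sub_eq_zero, ha1, hb1]
  rw [maxNA_iff]
  constructor
  · rintro h i j r s ⟨e1, e2, e3⟩
    obtain ⟨hA, hB, hC, hE⟩ := hnz i j r s
    obtain ⟨k, hk, hks⟩ := exists_sq (F := F) h1 (sq (cB (cc a b j) (cc a b r) (cc a b s)) == i)
    set A := cA (cc a b i) (cc a b r) (cc a b s) with hAd
    set B := cB (cc a b j) (cc a b r) (cc a b s) with hBd
    set C := cC (cc a b i) (cc a b j) (cc a b r) (cc a b s) with hCd
    set E := cE (cc a b i) (cc a b j) (cc a b r) (cc a b s) with hEd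
    have s1 : sq (B * k) = i := by
      rw [sq_mul _ _ hB hk, hks]; cases sq B <;> cases i <;> rfl
    have s2 : sq (A * k) = j := by
      rw [sq_mul _ _ hA hk, hks]
      revert e1; cases sq B <;> cases i <;> cases j <;> cases sq A <;> simp
    have s3 : sq (C * k) = r := by
      rw [sq_mul _ _ hC hk, hks]
      revert e2; cases sq B <;> cases i <;> cases r <;> cases sq C <;> simp
    have s4 : sq (E * k) = s := by
      rw [sq_mul _ _ hE hk, hks]
      revert e3; cases sq B <;> cases i <;> cases s <;> cases sq E <;> simp
    have := (h (B * k) (A * k) ?_).1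
    · exact mul_ne_zero hB hk this
    · have q1 : qop a b (B * k) 0 = (1 - cc a b i) * (B * k) := by
        rw [qop_eq, zero_sub, sq_neg h1, s1]; ring
      have q2 : qop a b 0 (A * k) = cc a b j * (A * k) := by
        rw [qop_eq, sub_zero, s2]; ring
      rw [q1, q2, qop_eq, qop_eq,
        show A * k - (1 - cc a b i) * (B * k) = C * k by rw [hCd, cC, ← hAd, ← hBd]; ring,
        show cc a b j * (A * k) - B * k = E * k by rw [hEd, cE, ← hAd, ← hBd]; ring,
        s3, s4, hCd, hEd, cC, cE, ← hAd, ← hBd]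
      have hA' : A = cc a b s - cc a b i - cc a b r + cc a b i * cc a b r := hAd
      have hB' : B = cc a b s * cc a b j - cc a b r := hBd
      linear_combination (k * A) * hB' - (k * B) * hA'
  · intro h u w e
    set i := sq u with hi
    set j := sq w with hj
    have q1 : qop a b u 0 = (1 - cc a b i) * u := by
      rw [qop_eq, zero_sub, sq_neg h1]; ring
    have q2 : qop a b 0 w = cc a b j * w := by
      rw [qop_eq, sub_zero]; ring
    rw [q1, q2, qop_eq, qop_eq] at e
    set r := sq (w - (1 - cc a b i) * u) with hr
    set s := sq (cc a b j * w - u) with hs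
    have e' : u * cA (cc a b i) (cc a b r) (cc a b s) = w * cB (cc a b j) (cc a b r) (cc a b s) := by
      unfold cA cB
      linear_combination e
    by_cases hu : u = 0
    · refine ⟨hu, ?_⟩
      by_contra hw
      have hrj : r = j := by rw [hr, hu]; simp [hj]
      rw [hu, hrj] at e'
      unfold cB at e'
      have : w * cc a b j * (cc a b s - 1) = 0 := by linear_combination -e'
      exact mul_ne_zero (mul_ne_zero hw (hc0 j)) (hc1 s) this
    by_cases hw : w = 0
    · exfalso
      have hsi : s = i := by rw [hs, hw, mul_zero, zero_sub, sq_neg h1]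
      rw [hw, hsi] at e'
      unfold cA at e'
      have : u * cc a b r * (cc a b i - 1) = 0 := by linear_combination e'
      exact mul_ne_zero (mul_ne_zero hu (hc0 r)) (hc1 i) this
    exfalso
    obtain ⟨hA, hB, hC, hE⟩ := hnz i j r s
    refine h i j r s ?_
    unfold Bad
    set A := cA (cc a b i) (cc a b r) (cc a b s) with hAd
    set B := cB (cc a b j) (cc a b r) (cc a b s) with hBd
    set C := cC (cc a b i) (cc a b j) (cc a b r) (cc a b s)
    set E := cE (cc a b i) (cc a b j) (cc a b r) (cc a b s)
    have hCd : C = A - (1 - cc a b i) * B := rfl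
    have hEd : E = cc a b j * A - B := rfl
    have t1 := sq_mul u A hu hA
    rw [e', sq_mul w B hw hB, ← hi, ← hj] at t1
    have t2 := sq_mul u C hu hC
    have z2 : u * C = (w - (1 - cc a b i) * u) * B := by linear_combination e' + u * hCd
    have z2' : w - (1 - cc a b i) * u ≠ 0 := by
      intro h0; rw [h0, zero_mul] at z2; exact mul_ne_zero hu hC z2
    rw [z2, sq_mul _ B z2' hB, ← hr, ← hi] at t2
    have t3 := sq_mul u E hu hE
    have z3 : u * E = (cc a b j * w - u) * B := by linear_combination (cc a b j) * e' + u * hEd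
    have z3' : cc a b j * w - u ≠ 0 := by
      intro h0; rw [h0, zero_mul] at z3; exact mul_ne_zero hu hE z3
    rw [z3, sq_mul _ B z3' hB, ← hs, ← hi] at t3
    exact ⟨boolA _ _ _ _ t1, boolB _ _ _ _ t2, boolB _ _ _ _ t3⟩

end

end Equivalence

namespace Equivalence

section
variable {F : Type*} [Field F] [Fintype F]

/-- one orientation of the case analysis -/
structure Gen (x y : F) : Prop where
  hx : x ≠ 0
  hy : y ≠ 0
  hx1 : 1 - x ≠ 0
  hy1 : 1 - y ≠ 0
  f1 : x ^ 2 - 2 * x + y ≠ 0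
  f2 : y ^ 2 - x ≠ 0
  f3 : x - y - x * y + x * y ^ 2 ≠ 0
  f3s : y - x - x * y + x ^ 2 * y ≠ 0
  f4 : x - x * y - y ^ 2 + x * y ^ 2 ≠ 0
  f5 : y - x - x * y ≠ 0
  f5s : x - y - x * y ≠ 0
  f6 : x * y - 2 * y + 1 ≠ 0

variable {x y : F}

lemma nz_of (ci cj cr cs A B C E : F) (hA : cA ci cr cs = A) (hB : cB cj cr cs = B)
    (hC : cC ci cj cr cs = C) (hE : cE ci cj cr cs = E)
    (h : A ≠ 0 ∧ B ≠ 0 ∧ C ≠ 0 ∧ E ≠ 0) : NZ ci cj cr cs := by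
  unfold NZ; rw [hA, hB, hC, hE]; exact h

lemma case1 (h1 : Fintype.card F % 4 = 1) (g : Gen x y) :
    NZ x x x x ∧ (Bad x x x x true true true ↔ (sq x && sq (1 - x)) = true) := by
  have hA : cA x x x = -(x * (1 - x)) := by unfold cA; ring
  have hB : cB x x x = -(x * (1 - x)) := by unfold cB; ring
  have hC : cC x x x x = -(x * (x * (1 - x))) := by unfold cC cA cB; ring
  have hE : cE x x x x = (1 - x) * (x * (1 - x)) := by unfold cE cA cB; ring
  have hp := mul_ne_zero g.hx g.hx1
  refine ⟨nz_of _ _ _ _ _ _ _ _ hA hB hC hE ⟨neg_ne_zero.2 hp, neg_ne_zero.2 hp,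
    neg_ne_zero.2 (mul_ne_zero g.hx hp), mul_ne_zero g.hx1 hp⟩, ?_⟩
  unfold Bad
  rw [hA, hB, hC, hE, sq_neg h1, sq_neg h1, sq_mul _ _ g.hx hp, sq_mul _ _ g.hx1 hp,
    sq_mul _ _ g.hx g.hx1]
  generalize sq x = α; generalize sq (1 - x) = β
  revert α β; decide

lemma case2 (h1 : Fintype.card F % 4 = 1) (g : Gen x y) :
    NZ x y x x ∧ (sq y = sq x → sq (1 - y) = sq (1 - x) → ¬ Bad x y x x false true true) := by
  have hA : cA x x x = -(x * (1 - x)) := by unfold cA; ring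
  have hB : cB y x x = -(x * (1 - y)) := by unfold cB; ring
  have hC : cC x y x x = -(x * (y * (1 - x))) := by unfold cC cA cB; ring
  have hE : cE x y x x = x * (x * y - 2 * y + 1) := by unfold cE cA cB; ring
  have hp := mul_ne_zero g.hx g.hx1
  have hp' := mul_ne_zero g.hx g.hy1
  have hp2 := mul_ne_zero g.hy g.hx1
  refine ⟨nz_of _ _ _ _ _ _ _ _ hA hB hC hE ⟨neg_ne_zero.2 hp, neg_ne_zero.2 hp',
    neg_ne_zero.2 (mul_ne_zero g.hx hp2), mul_ne_zero g.hx g.f6⟩, ?_⟩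
  intro e1 e2
  unfold Bad
  rw [hA, hB, sq_neg h1, sq_neg h1, sq_mul _ _ g.hx g.hx1, sq_mul _ _ g.hx g.hy1, e2]
  simp

lemma case3 (h1 : Fintype.card F % 4 = 1) (g : Gen x y) :
    NZ y x x x ∧ (sq y = sq x → sq (1 - y) = sq (1 - x) → ¬ Bad y x x x false false false) := by
  have hA : cA y x x = -(y * (1 - x)) := by unfold cA; ring
  have hB : cB x x x = -(x * (1 - x)) := by unfold cB; ring
  have hC : cC y x x x = (1 - x) * (x - y - x * y) := by unfold cC cA cB; ring
  have hE : cE y x x x = x * ((1 - x) * (1 - y)) := by unfold cE cA cB; ring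
  have hp := mul_ne_zero g.hx g.hx1
  have hp' := mul_ne_zero g.hy g.hx1
  refine ⟨nz_of _ _ _ _ _ _ _ _ hA hB hC hE ⟨neg_ne_zero.2 hp', neg_ne_zero.2 hp,
    mul_ne_zero g.hx1 g.f5s, mul_ne_zero g.hx (mul_ne_zero g.hx1 g.hy1)⟩, ?_⟩
  intro e1 e2
  unfold Bad
  rw [hA, hB, sq_neg h1, sq_neg h1, sq_mul _ _ g.hx g.hx1, sq_mul _ _ g.hy g.hx1, e1]
  simp

lemma case4 (h1 : Fintype.card F % 4 = 1) (g : Gen x y) :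
    NZ y y x x ∧ (sq y = sq x → sq (1 - y) = sq (1 - x) → (Bad y y x x true false false ↔
      ((sq (x - y - x * y + x * y ^ 2) != (sq x == sq (1 - x))) &&
        (sq (x - x * y - y ^ 2 + x * y ^ 2) != (sq x == sq (1 - x)))) = true)) := by
  have hA : cA y x x = -(y * (1 - x)) := by unfold cA; ring
  have hB : cB y x x = -(x * (1 - y)) := by unfold cB; ring
  have hC : cC y y x x = x - y - x * y + x * y ^ 2 := by unfold cC cA cB; ring
  have hE : cE y y x x = x - x * y - y ^ 2 + x * y ^ 2 := by unfold cE cA cB; ring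
  refine ⟨nz_of _ _ _ _ _ _ _ _ hA hB hC hE ⟨neg_ne_zero.2 (mul_ne_zero g.hy g.hx1),
    neg_ne_zero.2 (mul_ne_zero g.hx g.hy1), g.f3, g.f4⟩, ?_⟩
  intro e1 e2
  unfold Bad
  rw [hA, hB, hC, hE, sq_neg h1, sq_neg h1, sq_mul _ _ g.hx g.hy1, sq_mul _ _ g.hy g.hx1, e1, e2]
  generalize sq x = α; generalize sq (1 - x) = β
  generalize sq (x - y - x * y + x * y ^ 2) = s
  generalize sq (x - x * y - y ^ 2 + x * y ^ 2) = t
  revert α β s t; decide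

lemma case5 (h1 : Fintype.card F % 4 = 1) (g : Gen x y) :
    NZ x x x y ∧ (sq y = sq x → sq (1 - y) = sq (1 - x) → (Bad x x x y true true false ↔
      (!(sq (1 - x)) && (sq (x ^ 2 - 2 * x + y) == (sq x == sq (1 - x))) &&
        (sq (y - x - x * y + x ^ 2 * y) == (sq x == sq (1 - x)))) = true)) := by
  have hA : cA x x y = x ^ 2 - 2 * x + y := by unfold cA; ring
  have hB : cB x x y = -(x * (1 - y)) := by unfold cB; ring
  have hC : cC x x x y = y - x - x * y + x ^ 2 * y := by unfold cC cA cB; ring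
  have hE : cE x x x y = x * ((1 - x) * (1 - x)) := by unfold cE cA cB; ring
  have hp := mul_ne_zero g.hx1 g.hx1
  refine ⟨nz_of _ _ _ _ _ _ _ _ hA hB hC hE ⟨g.f1,
    neg_ne_zero.2 (mul_ne_zero g.hx g.hy1), g.f3s, mul_ne_zero g.hx hp⟩, ?_⟩
  intro e1 e2
  unfold Bad
  rw [hA, hB, hC, hE, sq_neg h1, sq_mul _ _ g.hx g.hy1, sq_mul _ _ g.hx hp,
    sq_mul _ _ g.hx1 g.hx1, e2]
  generalize sq x = α; generalize sq (1 - x) = β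
  generalize sq (x ^ 2 - 2 * x + y) = s
  generalize sq (y - x - x * y + x ^ 2 * y) = t
  revert α β s t; decide

lemma case6 (g : Gen x y) :
    NZ x y x y ∧ (sq y = sq x → sq (1 - y) = sq (1 - x) → (Bad x y x y false true false ↔
      ((sq (x ^ 2 - 2 * x + y) != sq (y ^ 2 - x)) &&
        ((sq (y ^ 2 - x) == sq (y - x - x * y)) == sq (1 - x)) &&
        ((sq (y ^ 2 - x) == sq (x * y - 2 * y + 1)) != sq x)) = true)) := by
  have hA : cA x x y = x ^ 2 - 2 * x + y := by unfold cA; ring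
  have hB : cB y x y = y ^ 2 - x := by unfold cB; ring
  have hC : cC x y x y = (1 - y) * (y - x - x * y) := by unfold cC cA cB; ring
  have hE : cE x y x y = x * (x * y - 2 * y + 1) := by unfold cE cA cB; ring
  refine ⟨nz_of _ _ _ _ _ _ _ _ hA hB hC hE ⟨g.f1, g.f2, mul_ne_zero g.hy1 g.f5,
    mul_ne_zero g.hx g.f6⟩, ?_⟩
  intro e1 e2
  unfold Bad
  rw [hA, hB, hC, hE, sq_mul _ _ g.hy1 g.f5, sq_mul _ _ g.hx g.f6, e2]
  generalize sq x = α; generalize sq (1 - x) = β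
  generalize sq (x ^ 2 - 2 * x + y) = s
  generalize sq (y ^ 2 - x) = t
  generalize sq (y - x - x * y) = p
  generalize sq (x * y - 2 * y + 1) = r
  revert α β s t p r; decide

lemma case7 (g : Gen x y) :
    NZ y x x y ∧ ¬ Bad y x x y false false true := by
  have hA : cA y x y = -(x * (1 - y)) := by unfold cA; ring
  have hB : cB x x y = -(x * (1 - y)) := by unfold cB; ring
  have hC : cC y x x y = -(x * (y * (1 - y))) := by unfold cC cA cB; ring
  have hE : cE y x x y = x * ((1 - x) * (1 - y)) := by unfold cE cA cB; ring
  have hp := neg_ne_zero.2 (mul_ne_zero g.hx g.hy1)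
  refine ⟨nz_of _ _ _ _ _ _ _ _ hA hB hC hE ⟨hp, hp,
    neg_ne_zero.2 (mul_ne_zero g.hx (mul_ne_zero g.hy g.hy1)),
    mul_ne_zero g.hx (mul_ne_zero g.hx1 g.hy1)⟩, ?_⟩
  unfold Bad
  rw [hA, hB]
  simp

lemma case8 (h1 : Fintype.card F % 4 = 1) (g : Gen x y) :
    NZ y y x y ∧ (sq y = sq x → sq (1 - y) = sq (1 - x) → (Bad y y x y true false true ↔
      (!(sq x) && (sq (y ^ 2 - x) == (sq x == sq (1 - x))) &&
        (sq (y ^ 2 - x) == sq (x - x * y - y ^ 2 + x * y ^ 2))) = true)) := by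
  have hA : cA y x y = -(x * (1 - y)) := by unfold cA; ring
  have hB : cB y x y = y ^ 2 - x := by unfold cB; ring
  have hC : cC y y x y = -(y * (y * (1 - y))) := by unfold cC cA cB; ring
  have hE : cE y y x y = x - x * y - y ^ 2 + x * y ^ 2 := by unfold cE cA cB; ring
  have hp := mul_ne_zero g.hy g.hy1
  refine ⟨nz_of _ _ _ _ _ _ _ _ hA hB hC hE ⟨neg_ne_zero.2 (mul_ne_zero g.hx g.hy1), g.f2,
    neg_ne_zero.2 (mul_ne_zero g.hy hp), g.f4⟩, ?_⟩
  intro e1 e2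
  unfold Bad
  rw [hA, hB, hC, hE, sq_neg h1, sq_neg h1, sq_mul _ _ g.hx g.hy1, sq_mul _ _ g.hy hp,
    sq_mul _ _ g.hy g.hy1, e1, e2]
  generalize sq x = α; generalize sq (1 - x) = β
  generalize sq (y ^ 2 - x) = s
  generalize sq (x - x * y - y ^ 2 + x * y ^ 2) = t
  revert α β s t; decide

/-- the criterion -/
theorem maxNA_iff_crit (h1 : Fintype.card F % 4 = 1) (a b : F) (hab : a ≠ b)
    (ha : a ≠ 0) (ha1 : a ≠ 1) (hev : ∀ i, Polys.ev a b i ≠ 0) :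
    ((a, b) ∈ SigSet F ∧ MaxNA a b) ↔
      crit (sq a) (sq (1 - a)) (fun i => sq (Polys.ev a b i)) = true := by
  have v0 : b ≠ 0 := hev 0
  have v1 : 1 - b ≠ 0 := hev 1
  have v2 : a ^ 2 - 2 * a + b ≠ 0 := hev 2
  have v3 : b ^ 2 - 2 * b + a ≠ 0 := hev 3
  have v4 : b ^ 2 - a ≠ 0 := hev 4
  have v5 : a ^ 2 - b ≠ 0 := hev 5
  have v6 : a - b - a * b + a * b ^ 2 ≠ 0 := hev 6
  have v7 : b - a - a * b + a ^ 2 * b ≠ 0 := hev 7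
  have v8 : a - a * b - b ^ 2 + a * b ^ 2 ≠ 0 := hev 8
  have v9 : b - a * b - a ^ 2 + a ^ 2 * b ≠ 0 := hev 9
  have v10 : b - a - a * b ≠ 0 := hev 10
  have v11 : a - b - a * b ≠ 0 := hev 11
  have v12 : a * b - 2 * b + 1 ≠ 0 := hev 12
  have v13 : a * b - 2 * a + 1 ≠ 0 := hev 13
  have w6 : b - a - b * a + b * a ^ 2 = b - a - a * b + a ^ 2 * b := by ring
  have w7 : a - b - b * a + b ^ 2 * a = a - b - a * b + a * b ^ 2 := by ring
  have w8 : b - b * a - a ^ 2 + b * a ^ 2 = b - a * b - a ^ 2 + a ^ 2 * b := by ring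
  have w10 : a - b - b * a = a - b - a * b := by ring
  have w11 : b - a - b * a = b - a - a * b := by ring
  have w12 : b * a - 2 * a + 1 = a * b - 2 * a + 1 := by ring
  have ha1' : 1 - a ≠ 0 := sub_ne_zero.2 ha1.symm
  have hb1 : b ≠ 1 := (sub_ne_zero.1 v1).symm
  have g : Gen a b := ⟨ha, v0, ha1', v1, v2, v4, v6, v7, v8, v10, v11, v12⟩
  have g' : Gen b a := ⟨v0, ha, v1, ha1', v3, v5, by rwa [w6], by rwa [w7], by rwa [w8],
    by rwa [w10], by rwa [w11], by rwa [w12]⟩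
  have hnz : ∀ i j r s, NZ (cc a b i) (cc a b j) (cc a b r) (cc a b s) := by
    intro i j r s
    cases i <;> cases j <;> cases r <;> cases s <;> simp only [cc, if_true, if_false,
      Bool.false_eq_true]
    · exact (case1 h1 g').1
    · exact (case5 h1 g').1
    · exact (case8 h1 g).1
    · exact (case4 h1 g).1
    · exact (case2 h1 g').1
    · exact (case6 g').1
    · exact (case7 g).1
    · exact (case3 h1 g).1
    · exact (case3 h1 g').1
    · exact (case7 g').1
    · exact (case6 g).1
    · exact (case2 h1 g).1
    · exact (case4 h1 g').1
    · exact (case8 h1 g').1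
    · exact (case5 h1 g).1
    · exact (case1 h1 g).1
  have hsig : (a, b) ∈ SigSet F ↔ sq b = sq a ∧ sq (1 - b) = sq (1 - a) := by
    have p1 := sq_mul a b ha v0
    have p2 := sq_mul (1 - a) (1 - b) ha1' v1
    have q1 : IsSquare (a * b) ↔ sq b = sq a := by
      have : IsSquare (a * b) ↔ sq (a * b) = true := by simp [sq]
      rw [this, p1, beq_iff_eq, eq_comm]
    have q2 : IsSquare ((1 - a) * (1 - b)) ↔ sq (1 - b) = sq (1 - a) := by
      have : IsSquare ((1 - a) * (1 - b)) ↔ sq ((1 - a) * (1 - b)) = true := by simp [sq]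
      rw [this, p2, beq_iff_eq, eq_comm]
    simp only [SigSet, Set.mem_setOf_eq]
    rw [q1, q2]
    tauto
  by_cases hS : sq b = sq a ∧ sq (1 - b) = sq (1 - a)
  · obtain ⟨e1, e2⟩ := hS
    have hs : (a, b) ∈ SigSet F := hsig.2 ⟨e1, e2⟩
    simp only [hs, true_and]
    rw [maxNA_iff_bad h1 a b ha ha1 v0 hb1 hnz]
    have z1 := (case1 h1 g').2
    have z4 := (case4 h1 g').2 e1.symm e2.symm
    have z5 := (case5 h1 g').2 e1.symm e2.symm
    have z6 := (case6 g').2 e1.symm e2.symm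
    have z8 := (case8 h1 g').2 e1.symm e2.symm
    rw [e1, e2] at z1 z4 z5 z6 z8
    rw [w6, w8] at z4
    rw [w7] at z5
    rw [w10, w12] at z6
    rw [w8] at z8
    simp only [Bool.forall_bool, cc, if_true, if_false, Bool.false_eq_true, beq_self_eq_true,
      show (false == true) = false from rfl, show (true == false) = false from rfl,
      (case1 h1 g).2, z1, (case4 h1 g).2 e1 e2, z4, (case5 h1 g).2 e1 e2, z5,
      (case6 g).2 e1 e2, z6, (case8 h1 g).2 e1 e2, z8, (case2 h1 g).2 e1 e2,
      (case2 h1 g').2 e1.symm e2.symm, (case3 h1 g).2 e1 e2,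
      (case3 h1 g').2 e1.symm e2.symm, (case7 g).2, (case7 g').2, not_false_eq_true,
      true_and, and_true]
    have c0 : sq (Polys.ev a b 0) = sq a := e1
    have c1 : sq (Polys.ev a b 1) = sq (1 - a) := e2
    simp only [crit, bd, c0, c1]
    simp only [Polys.ev, Matrix.cons_val]
    simp only [beq_self_eq_true, Bool.true_and, Bool.and_eq_true (!_) , Bool.and_eq_true (_ && !_),
      Bool.not_eq_true', Bool.or_eq_false_iff, Bool.not_eq_true]
    clear * -
    simp only [and_assoc]
    constructor
    · rintro ⟨k1, k2, k3, k4, k5, k6, k7, k8, k9, k10⟩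
      and_intros <;> assumption
    · rintro ⟨k1, k2, k3, k4, k5, k6, k7, k8, k9⟩
      and_intros <;> assumption
  · constructor
    · rintro ⟨h, -⟩
      exact absurd (hsig.1 h) hS
    · intro h
      refine absurd ?_ hS
      simp only [crit, Bool.and_eq_true, beq_iff_eq] at h
      exact ⟨h.1.1.1.1.symm, h.1.1.1.2.symm⟩

end

end Equivalence

namespace Equivalence

/-- sum over a Boolean -/
def sb (f : Bool → ℕ) : ℕ := f true + f false

/-- iterated Boolean sum of a function of a Boolean vector -/
def sv : (n : ℕ) → ((Fin n → Bool) → ℕ) → ℕ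
  | 0, g => g Fin.elim0
  | n + 1, g => sb fun t => sv n fun e => g (Fin.cons t e)

lemma sum_eq_sv : ∀ (n : ℕ) (g : (Fin n → Bool) → ℕ), ∑ e, g e = sv n g
  | 0, g => by
    rw [Fintype.sum_unique]
    exact congrArg g (Subsingleton.elim _ _)
  | n + 1, g => by
    rw [← (Fin.consEquiv (fun _ : Fin (n + 1) => Bool)).sum_comp, Fintype.sum_prod_type,
      Fintype.sum_bool]
    simp only [sv, sb]
    rw [← sum_eq_sv n, ← sum_eq_sv n]
    rfl

/-- number of good sign patterns -/
def mm (α β : Bool) : ℕ := if α && β then 0 else if !α && !β then 338 else 784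

/-- the nested sum -/
def ns (α β : Bool) : ℕ :=
  sb fun e0 => sb fun e1 => bif (α == e0) && (β == e1) && !(α && β) then
  sb fun e2 => sb fun e3 => sb fun e4 => sb fun e5 => sb fun e6 => sb fun e7 => sb fun e8 =>
  sb fun e9 => sb fun e10 => sb fun e11 => sb fun e12 => sb fun e13 =>
  bif !(bd α β e2 e4 e6 e7 e8 e10 e12) && !(bd α β e3 e5 e7 e6 e9 e11 e13) then 1 else 0 else 0

lemma ns_eq : ∀ α β, ns α β = mm α β := by
  decide +kernel

lemma sb_zero : (sb fun _ => 0) = 0 := rfl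

lemma sum_crit (α β : Bool) :
    ∑ e : Fin 14 → Bool, (if crit α β e = true then 1 else 0 : ℕ) = mm α β := by
  rw [← ns_eq, sum_eq_sv]
  simp only [sv, ns]
  refine congrArg sb (funext fun e0 => ?_)
  refine congrArg sb (funext fun e1 => ?_)
  cases h : ((α == e0) && (β == e1) && !(α && β))
  · rw [cond_false]
    have : ∀ e : Fin 12 → Bool, crit α β (Fin.cons e0 (Fin.cons e1 e)) = false := by
      intro e
      have h' : ((α == (Fin.cons e0 (Fin.cons e1 e) : Fin 14 → Bool) 0) &&
        (β == (Fin.cons e0 (Fin.cons e1 e) : Fin 14 → Bool) 1) && !(α && β)) = false := h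
      unfold crit
      rw [h']; rfl
    simp only [this]
    rfl
  · rw [cond_true]
    refine congrArg sb (funext fun e2 => ?_)
    refine congrArg sb (funext fun e3 => ?_)
    refine congrArg sb (funext fun e4 => ?_)
    refine congrArg sb (funext fun e5 => ?_)
    refine congrArg sb (funext fun e6 => ?_)
    refine congrArg sb (funext fun e7 => ?_)
    refine congrArg sb (funext fun e8 => ?_)
    refine congrArg sb (funext fun e9 => ?_)
    refine congrArg sb (funext fun e10 => ?_)
    refine congrArg sb (funext fun e11 => ?_)
    refine congrArg sb (funext fun e12 => ?_)
    refine congrArg sb (funext fun e13 => ?_)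
    have : ∀ p q : Bool, p = q → (if p = true then 1 else 0 : ℕ) = bif q then 1 else 0 := by
      decide
    apply this
    have h' : crit α β (Fin.cons e0 (Fin.cons e1 (Fin.cons e2 (Fin.cons e3 (Fin.cons e4
      (Fin.cons e5 (Fin.cons e6 (Fin.cons e7 (Fin.cons e8 (Fin.cons e9 (Fin.cons e10
      (Fin.cons e11 (Fin.cons e12 (Fin.cons e13 Fin.elim0)))))))))))))) =
      (((α == e0) && (β == e1) && !(α && β)) && !(bd α β e2 e4 e6 e7 e8 e10 e12) &&
        !(bd α β e3 e5 e7 e6 e9 e11 e13)) := rfl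
    rw [h', h, Bool.true_and]

end Equivalence

namespace Final
open Polys Equivalence Fourier

variable {F : Type*} [Field F] [Fintype F]

theorem main_bound' {ι : Type*} [Fintype ι] [DecidableEq ι] {B : Type*} [Fintype B]
    (Φ : (ι → Bool) → ℝ) (s : B → ι → ℝ) (M : ℝ) (hM0 : 0 ≤ M)
    (hM : ∀ T : Finset ι, T.Nonempty → |∑ b, ∏ i ∈ T, s b i| ≤ M) :
    |∑ b, ext Φ (s b) - Fintype.card B * ((∑ ε, Φ ε) / 2 ^ (Fintype.card ι))| ≤
      M * √(∑ ε, Φ ε ^ 2) := by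
  convert main_bound Φ s M hM0 hM

/-- indicator of the counted pairs -/
def ind (a b : F) : ℝ := if (a, b) ∈ SigSet F ∧ MaxNA a b then 1 else 0

lemma ind_nonneg (a b : F) : 0 ≤ ind a b := by unfold ind; split_ifs <;> norm_num
lemma ind_le_one (a b : F) : ind a b ≤ 1 := by unfold ind; split_ifs <;> norm_num

lemma sigma_eq_sum : (sigmaCount F : ℝ) = ∑ a : F, ∑ b : F, ind a b := by
  unfold sigmaCount
  rw [Set.ncard_eq_toFinset_card', ← Fintype.sum_prod_type']
  simp only [ind]
  rw [Finset.sum_boole]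
  congr 2
  ext p
  simp

lemma ch_eq (x : F) (hx : x ≠ 0) : ch x = sg (sq x) := by
  unfold ch sg Equivalence.sq
  by_cases hs : IsSquare x
  · simp [hs, (quadraticChar_one_iff_isSquare hx).2 hs]
  · simp [hs, quadraticChar_neg_one_iff_not_isSquare.2 hs]

lemma abs_sg (e : Bool) : |sg e| ≤ 1 := by cases e <;> simp [sg]

lemma abs_ch (x : F) : |ch x| ≤ 1 := by
  by_cases hx : x = 0
  · simp [hx, ch]
  · rw [ch_eq x hx]; exact abs_sg _

/-- real valued criterion -/
def Phi (α β : Bool) (e : Fin 14 → Bool) : ℝ := if crit α β e = true then 1 else 0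

lemma Phi_nonneg (α β e) : 0 ≤ Phi α β e := by unfold Phi; split_ifs <;> norm_num
lemma Phi_le_one (α β e) : Phi α β e ≤ 1 := by unfold Phi; split_ifs <;> norm_num

lemma sum_Phi (α β : Bool) : ∑ e, Phi α β e = mm α β := by
  rw [← sum_crit]
  push_cast
  rfl

lemma sum_Phi_sq (α β : Bool) : √(∑ e, Phi α β e ^ 2) ≤ 28 := by
  have : ∀ e, Phi α β e ^ 2 = Phi α β e := by
    intro e; unfold Phi; split_ifs <;> norm_num
  simp only [this]
  rw [sum_Phi]
  apply Real.sqrt_le_iff.2 ⟨by norm_num, ?_⟩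
  cases α <;> cases β <;> norm_num [mm]

lemma abs_sub_le_one {x y : ℝ} (h1 : 0 ≤ x) (h2 : x ≤ 1) (h3 : 0 ≤ y) (h4 : y ≤ 1) :
    |x - y| ≤ 1 := by
  rw [abs_le]; constructor <;> linarith

theorem inner_count (h1 : Fintype.card F % 4 = 1) (hq : 2518 ^ 2 ≤ Fintype.card F)
    (h2 : (2 : F) ≠ 0) (a : F) (hg : gd a ≠ 0) :
    |∑ b : F, ind a b - (Fintype.card F : ℝ) * ((mm (sq a) (sq (1 - a)) : ℝ) / 2 ^ 14)| ≤
      1708 * √(Fintype.card F : ℝ) + 19 := by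
  have ha : a ≠ 0 := (gd_factors hg).1
  have ha1 : a ≠ 1 := sub_ne_zero.1 (gd_factors hg).2.1
  have hS : 0 ≤ √(Fintype.card F : ℝ) := Real.sqrt_nonneg _
  have hb := main_bound' (Phi (sq a) (sq (1 - a))) (fun (b : F) i => ch (ev a b i))
    (61 * √(Fintype.card F : ℝ)) (by positivity)
    (fun T hT => inner_bound (by omega) hq h2 a hg T hT)
  rw [sum_Phi, Fintype.card_fin] at hb
  have hb' : 61 * √(Fintype.card F : ℝ) * √(∑ e, Phi (sq a) (sq (1 - a)) e ^ 2) ≤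
      61 * √(Fintype.card F : ℝ) * 28 :=
    mul_le_mul_of_nonneg_left (sum_Phi_sq _ _) (by positivity)
  set X := ∑ b : F, ext (Phi (sq a) (sq (1 - a))) (fun i => ch (ev a b i)) with hX
  have hd : |∑ b : F, ind a b - X| ≤ 19 := by
    rw [hX, ← Finset.sum_sub_distrib]
    refine (Finset.abs_sum_le_sum_abs _ _).trans ?_
    have ht : ∀ b ∈ (Finset.univ : Finset F),
        |ind a b - ext (Phi (sq a) (sq (1 - a))) (fun i => ch (ev a b i))| ≤
        (if ∃ i, ev a b i = 0 then 1 else 0) + (if b = a then 1 else 0) := by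
      intro b _
      have hm := ext_mem (Phi (sq a) (sq (1 - a))) (Phi_nonneg _ _) (Phi_le_one _ _)
        (fun i => ch (ev a b i)) (fun i => abs_ch _)
      have h01 := abs_sub_le_one (ind_nonneg a b) (ind_le_one a b) hm.1 hm.2
      by_cases hz : ∃ i, ev a b i = 0
      · rw [if_pos hz]
        refine h01.trans ?_
        split_ifs <;> norm_num
      · rw [if_neg hz]
        by_cases hab : b = a
        · rw [if_pos hab, zero_add]; exact h01
        · rw [if_neg hab]
          push Not at hz
          have he : (fun i => ch (ev a b i)) = fun i => sg ((fun i => Equivalence.sq (ev a b i)) i) := by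
            funext i; exact ch_eq _ (hz i)
          rw [he, ext_sg]
          have hc := maxNA_iff_crit h1 a b (Ne.symm hab) ha ha1 hz
          simp only [ind, Phi, hc]
          simp
    refine (Finset.sum_le_sum ht).trans ?_
    rw [Finset.sum_add_distrib, Finset.sum_boole, Finset.sum_ite_eq' Finset.univ a,
      if_pos (Finset.mem_univ a)]
    have := card_zero_le h2 a hg
    have : ((Finset.univ.filter fun b : F => ∃ i, ev a b i = 0).card : ℝ) ≤ 18 := by
      exact_mod_cast this
    linarith
  have := abs_sub_le (∑ b : F, ind a b) X
    ((Fintype.card F : ℝ) * ((mm (sq a) (sq (1 - a)) : ℝ) / 2 ^ 14))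
  linarith

/-- normalised counts -/
def Psi (e : Fin 2 → Bool) : ℝ := (mm (e 0) (e 1) : ℝ) / 2 ^ 14

lemma Psi_nonneg (e) : 0 ≤ Psi e := by unfold Psi; positivity
lemma Psi_le_one (e) : Psi e ≤ 1 := by
  unfold Psi
  cases e 0 <;> cases e 1 <;> norm_num [mm]

lemma sum_fin2 (g : (Fin 2 → Bool) → ℝ) : ∑ e, g e =
    g ![true, true] + g ![true, false] + g ![false, true] + g ![false, false] := by
  rw [← (finTwoArrowEquiv Bool).symm.sum_comp, Fintype.sum_prod_type, Fintype.sum_bool,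
    Fintype.sum_bool, Fintype.sum_bool]
  simp only [finTwoArrowEquiv_symm_apply]
  ring

lemma sum_Psi : (∑ e, Psi e) / 2 ^ 2 = 953 * (2 : ℝ) ^ (-15 : ℤ) := by
  rw [sum_fin2]
  norm_num [Psi, mm]

lemma sum_Psi_sq : √(∑ e, Psi e ^ 2) ≤ 1 := by
  rw [sum_fin2]
  apply Real.sqrt_le_iff.2 ⟨by norm_num, ?_⟩
  norm_num [Psi, mm]

theorem big_case (h1 : Fintype.card F % 4 = 1) (hq : 2518 ^ 2 ≤ Fintype.card F) :
    |(sigmaCount F : ℝ) - 953 * (2 : ℝ) ^ (-15 : ℤ) * (Fintype.card F : ℝ) ^ 2| ≤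
      1769 * ((Fintype.card F : ℝ) * √(Fintype.card F : ℝ)) + 99 * (Fintype.card F : ℝ) := by
  have h2 : (2 : F) ≠ 0 := by
    apply Ring.two_ne_zero
    intro h
    have := FiniteField.even_card_of_char_two h
    omega
  set Q : ℝ := (Fintype.card F : ℝ) with hQ
  have hQ0 : 0 ≤ Q := by positivity
  have hS : 0 ≤ √Q := Real.sqrt_nonneg _
  have ho := main_bound' Psi (fun (a : F) i => ch ((![a, 1 - a] : Fin 2 → F) i))
    (61 * √Q) (by positivity) (fun T hT => outer_bound (by omega) hq T hT)
  rw [Fintype.card_fin, sum_Psi, ← hQ] at ho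
  have ho' : 61 * √Q * √(∑ e, Psi e ^ 2) ≤ 61 * √Q * 1 :=
    mul_le_mul_of_nonneg_left sum_Psi_sq (by positivity)
  set Y := ∑ a : F, ext Psi (fun i => ch ((![a, 1 - a] : Fin 2 → F) i)) with hY
  have hd : |(sigmaCount F : ℝ) - Q * Y| ≤ Q * (1708 * √Q + 19) + 80 * Q := by
    rw [sigma_eq_sum, hY, Finset.mul_sum, ← Finset.sum_sub_distrib]
    refine (Finset.abs_sum_le_sum_abs _ _).trans ?_
    have ht : ∀ a ∈ (Finset.univ : Finset F),
        |∑ b, ind a b - Q * ext Psi (fun i => ch ((![a, 1 - a] : Fin 2 → F) i))| ≤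
        (1708 * √Q + 19) + Q * (if gd a = 0 then 1 else 0) := by
      intro a _
      by_cases hg : gd a = 0
      · rw [if_pos hg]
        have hm := ext_mem Psi Psi_nonneg Psi_le_one
          (fun i => ch ((![a, 1 - a] : Fin 2 → F) i)) (fun i => abs_ch _)
        have hn0 : 0 ≤ ∑ b, ind a b := Finset.sum_nonneg fun b _ => ind_nonneg a b
        have hn1 : ∑ b, ind a b ≤ Q := by
          refine (Finset.sum_le_sum fun b _ => ind_le_one a b).trans ?_
          simp [hQ]
        have hm1 := mul_le_mul_of_nonneg_left hm.2 hQ0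
        have hm0 := mul_nonneg hQ0 hm.1
        rw [abs_le]
        constructor <;> linarith
      · rw [if_neg hg, mul_zero, add_zero]
        have ha : a ≠ 0 := (gd_factors hg).1
        have ha1 : a ≠ 1 := sub_ne_zero.1 (gd_factors hg).2.1
        have he : (fun i => ch ((![a, 1 - a] : Fin 2 → F) i)) =
            fun i => sg ((![Equivalence.sq a, Equivalence.sq (1 - a)] : Fin 2 → Bool) i) := by
          funext i
          fin_cases i
          · exact ch_eq _ ha
          · exact ch_eq _ (sub_ne_zero.2 ha1.symm)
        rw [he, ext_sg]
        exact inner_count h1 hq h2 a hg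
    refine (Finset.sum_le_sum ht).trans ?_
    rw [Finset.sum_add_distrib, ← Finset.mul_sum, Finset.sum_boole, Finset.sum_const,
      Finset.card_univ, nsmul_eq_mul, ← hQ]
    have := card_bad_le (F := F) h2
    have : ((Finset.univ.filter fun a : F => gd a = 0).card : ℝ) ≤ 80 := by
      exact_mod_cast this
    have := mul_le_mul_of_nonneg_left this hQ0
    linarith
  have hz : |Q * Y - 953 * (2 : ℝ) ^ (-15 : ℤ) * Q ^ 2| ≤ Q * (61 * √Q) := by
    have : Q * Y - 953 * (2 : ℝ) ^ (-15 : ℤ) * Q ^ 2 =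
      Q * (Y - Q * (953 * (2 : ℝ) ^ (-15 : ℤ))) := by ring
    rw [this, abs_mul, abs_of_nonneg hQ0]
    exact mul_le_mul_of_nonneg_left (by linarith) hQ0
  have := abs_sub_le (sigmaCount F : ℝ) (Q * Y) (953 * (2 : ℝ) ^ (-15 : ℤ) * Q ^ 2)
  linarith

end Final

/-- Theorem 5.3: for `q ≡ 1 (mod 4)`,
`|σ(q) - 953·2⁻¹⁵·q²| < 2518·q^{3/2} + 2623·q`. -/
theorem sigma_estimate_one_mod_four (F : Type*) [Field F] [Fintype F]
    (q : ℕ) (hq : Fintype.card F = q) (h1 : q % 4 = 1) :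
    |(sigmaCount F : ℝ) - 953 * (2 : ℝ) ^ (-15 : ℤ) * (q : ℝ) ^ 2|
      < 2518 * (q : ℝ) ^ ((3 : ℝ) / 2) + 2623 * (q : ℝ) := by
  subst hq
  have hpos : (0 : ℝ) < (Fintype.card F : ℝ) := by exact_mod_cast Fintype.card_pos
  have hpow : (Fintype.card F : ℝ) ^ ((3 : ℝ) / 2) =
      (Fintype.card F : ℝ) * √(Fintype.card F : ℝ) := by
    rw [show (3 : ℝ) / 2 = 1 + 1 / 2 by norm_num, Real.rpow_add hpos, Real.rpow_one,
      ← Real.sqrt_eq_rpow]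
  rw [hpow]
  have hS : 0 ≤ √(Fintype.card F : ℝ) := Real.sqrt_nonneg _
  have hQS : 0 ≤ (Fintype.card F : ℝ) * √(Fintype.card F : ℝ) := mul_nonneg hpos.le hS
  by_cases hbig : 2518 ^ 2 ≤ Fintype.card F
  · have := Final.big_case (F := F) h1 hbig
    linarith
  · push Not at hbig
    have hlt : √(Fintype.card F : ℝ) ≤ 2518 := by
      rw [Real.sqrt_le_iff]
      exact ⟨by norm_num, by exact_mod_cast hbig.le⟩
    have hsq : (Fintype.card F : ℝ) ^ 2 ≤
        2518 * ((Fintype.card F : ℝ) * √(Fintype.card F : ℝ)) := by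
      have h := Real.mul_self_sqrt hpos.le
      calc (Fintype.card F : ℝ) ^ 2 = (Fintype.card F : ℝ) *
            (√(Fintype.card F : ℝ) * √(Fintype.card F : ℝ)) := by rw [h]; ring
        _ ≤ (Fintype.card F : ℝ) * (2518 * √(Fintype.card F : ℝ)) := by gcongr
        _ = _ := by ring
    have hs0 : (0 : ℝ) ≤ (sigmaCount F : ℝ) := by positivity
    have hs1 : (sigmaCount F : ℝ) ≤ (Fintype.card F : ℝ) ^ 2 := by
      rw [Final.sigma_eq_sum]
      calc ∑ a : F, ∑ b : F, Final.ind a b ≤ ∑ a : F, ∑ b : F, (1 : ℝ) :=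
            Finset.sum_le_sum fun a _ => Finset.sum_le_sum fun b _ => Final.ind_le_one a b
        _ = _ := by simp; ring
    have hc : (953 * (2 : ℝ) ^ (-15 : ℤ)) = 953 / 32768 := by norm_num
    rw [hc, abs_lt]
    have : (0 : ℝ) ≤ (Fintype.card F : ℝ) ^ 2 := by positivity
    constructor <;> linarith
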